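/- arXiv:1310.7767 — 2 statements merged into one kernel-verified Lean document; each statement's English description precedes it below -/
import Mathlib

section
/- Let f be a standard solution family and let K = 2·∫₀¹ √(1 − t³) dt. Then for every δ > 0 there exist C > 0 and R > 0 such that for all λ ∈ ℂ with |λ| ≥ R and |arg λ| ≤ π − δ one has |f(0,λ)·λ^{1/4}·e^{−K·λ^{5/6}} − 1| ≤ C·|λ|^{−5/6}, where the powers λ^{1/4}, λ^{5/6} are taken with the principal branch. -/
open Complex

/-- `f : ℂ × ℂ → ℂ` is a standard solution family for `f'' = (z³ + λ) f`:
for each `λ` the map `z ↦ f(z,λ)` is entire and solves the ODE, and it has the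
Liouville–Green asymptotics `f(z,λ) = z^{-3/4} e^{-(2/5) z^{5/2}} (1 + O(z^{-1/2}))`
as `z → ∞` in the sector `|arg z| ≤ 3π/5 - ε`, uniformly for `λ` in compact sets. -/
def IsStdSolutionFamily (f : ℂ → ℂ → ℂ) : Prop :=
  (∀ lam : ℂ, Differentiable ℂ (fun z => f z lam) ∧
    ∀ z : ℂ, deriv (deriv (fun w => f w lam)) z = (z ^ 3 + lam) * f z lam) ∧
  (∀ ε > (0 : ℝ), ∀ L : Set ℂ, IsCompact L →
    ∃ C > (0 : ℝ), ∃ R > (0 : ℝ), ∀ lam ∈ L, ∀ z : ℂ,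
      R ≤ ‖z‖ → |Complex.arg z| ≤ 3 * Real.pi / 5 - ε →
      ‖f z lam * z ^ ((3 : ℂ) / 4) *
          Complex.exp ((2 / 5 : ℂ) * z ^ ((5 : ℂ) / 2)) - 1‖
        ≤ C * ‖z‖ ^ (-(1 / 2) : ℝ))

open Set Filter Topology MeasureTheory

/-!
Let `y` be the subdominant solution of `y'' = Q y`, `Q = xⁿ + λ`, and compare it on `[0, ∞)` with
its Liouville–Green approximation `r e^{-S}`, where `r = Q^{-1/4}` and `S = ∫₀ˣ Q^{1/2}`. The
Wronskians of `y` with `r e^{±S}` have derivatives carrying the factor `r''`; since `Re S` increases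
to infinity they can be integrated from `∞`, and the ratio `u = y / (r e^{-S})` satisfies
`(1 - V) |u(0) - u(∞)| ≤ V |u(∞)|` with `V = ∫ |r r''|`. In a sector avoiding the negative real axis
`|Q|` is at least a multiple of `(x + |λ|^{1/n})ⁿ`, which gives `V = O(|λ|^{-(1/2+1/n)})`.

Here `u(0) = y(0) λ^{1/4}`, while `u(∞) = exp(K λ^{1/2+1/n})` because the divergent part of `S`
is `(2/(n+2)) x^{n/2+1}` and what remains is a multiple of `λ ∫₀^∞ Q^{-1/2}`: a power of `λ`, by
scaling for `λ > 0` and by analytic continuation in the slit plane.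

For `n = 3` the value of `K` needs `∫₀^∞ dx/√(x³+1) = 2 ∫₀¹ dt/√(1-t³)`, which is the change of
variables given by duplication on the elliptic curve `w² = 1 - t³`.
-/

/-! ### Liouville–Green comparison on a half-line -/

theorem integrableOn_Ioi_of_hasDerivAt_of_norm_le {E : Type*} [NormedAddCommGroup E]
    [NormedSpace ℝ E] [CompleteSpace E] {F g : ℝ → E} {h : ℝ → ℝ} {a : ℝ}
    (hF : ∀ x ∈ Ici a, HasDerivAt F (g x) x) (hh : IntegrableOn h (Ioi a))
    (hgh : ∀ x ∈ Ioi a, ‖g x‖ ≤ h x) : IntegrableOn g (Ioi a) := by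
  have hg : AEStronglyMeasurable g (volume.restrict (Ioi a)) :=
    (aestronglyMeasurable_deriv F _).congr <|
      (ae_restrict_mem measurableSet_Ioi).mono fun x hx => (hF x (Ioi_subset_Ici_self hx)).deriv
  exact Integrable.mono' hh hg ((ae_restrict_mem measurableSet_Ioi).mono hgh)

theorem norm_sub_le_integral_Ioi_of_hasDerivAt {E : Type*} [NormedAddCommGroup E]
    [NormedSpace ℝ E] [CompleteSpace E] {F g : ℝ → E} {h : ℝ → ℝ} {a : ℝ} {L : E}
    (hF : ∀ x ∈ Ici a, HasDerivAt F (g x) x) (hL : Tendsto F atTop (𝓝 L))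
    (hh : IntegrableOn h (Ioi a)) (hgh : ∀ x ∈ Ioi a, ‖g x‖ ≤ h x) :
    ‖F a - L‖ ≤ ∫ x in Ioi a, h x := by
  have hg := integrableOn_Ioi_of_hasDerivAt_of_norm_le hF hh hgh
  rw [norm_sub_rev, ← integral_Ioi_of_hasDerivAt_of_tendsto' hF hg hL]
  exact norm_integral_le_of_norm_le hh ((ae_restrict_mem measurableSet_Ioi).mono hgh)

/-- The setting of the Liouville–Green comparison on `[a, ∞)`: a solution `y` of `y'' = r⁻⁴ y`
with derivative `y'`, an amplitude `r` with its derivatives `r'` and `r''`, and a phase `S` with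
`S' = r⁻²`. Up to a constant, `r e^{-S}` is the approximation of `y`, and the integral of `‖r r''‖`
controls its relative error. -/
structure IsLiouvilleGreen (a : ℝ) (r r' r'' S y y' : ℝ → ℂ) : Prop where
  ne_zero : ∀ x ∈ Ici a, r x ≠ 0
  hasDerivAt_amplitude : ∀ x ∈ Ici a, HasDerivAt r (r' x) x
  hasDerivAt_amplitude_deriv : ∀ x ∈ Ici a, HasDerivAt r' (r'' x) x
  hasDerivAt_phase : ∀ x ∈ Ici a, HasDerivAt S (r x ^ 2)⁻¹ x
  hasDerivAt_solution : ∀ x ∈ Ici a, HasDerivAt y (y' x) x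
  hasDerivAt_solution_deriv : ∀ x ∈ Ici a, HasDerivAt y' ((r x ^ 4)⁻¹ * y x) x
  re_phase_deriv_nonneg : ∀ x ∈ Ici a, 0 ≤ ((r x ^ 2)⁻¹).re
  tendsto_re_phase : Tendsto (fun x => (S x).re) atTop atTop
  integrableOn_errorControl : IntegrableOn (fun x => r x * r'' x) (Ioi a)

/-- The ratio of a solution `y` to its Liouville–Green approximation `r e^{-S}`. -/
noncomputable def lgRatio (r S y : ℝ → ℂ) (x : ℝ) : ℂ := exp (S x) * y x / r x

/-- For `ε = ±1`, the Wronskian of `y` and the approximation `r e^{εS}`. -/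
noncomputable def lgWronskian (ε : ℂ) (r r' S y y' : ℝ → ℂ) (x : ℝ) : ℂ :=
  exp (ε * S x) * (r x * y' x - (r' x + ε / r x) * y x)

theorem two_mul_lgRatio (r r' S y y' : ℝ → ℂ) (x : ℝ) :
    2 * lgRatio r S y x =
      lgWronskian (-1) r r' S y y' x * exp (2 * S x) - lgWronskian 1 r r' S y y' x := by
  have hexp : exp (-1 * S x) * exp (2 * S x) = exp (S x) := by rw [← exp_add]; ring_nf
  simp only [lgRatio, lgWronskian, one_mul]
  linear_combination -(r x * y' x - (r' x + -1 / r x) * y x) * hexp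

namespace IsLiouvilleGreen

variable {a : ℝ} {r r' r'' S y y' : ℝ → ℂ}

theorem mono (h : IsLiouvilleGreen a r r' r'' S y y') {b : ℝ} (hab : a ≤ b) :
    IsLiouvilleGreen b r r' r'' S y y' where
  ne_zero x hx := h.ne_zero x (hab.trans hx)
  hasDerivAt_amplitude x hx := h.hasDerivAt_amplitude x (hab.trans hx)
  hasDerivAt_amplitude_deriv x hx := h.hasDerivAt_amplitude_deriv x (hab.trans hx)
  hasDerivAt_phase x hx := h.hasDerivAt_phase x (hab.trans hx)
  hasDerivAt_solution x hx := h.hasDerivAt_solution x (hab.trans hx)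
  hasDerivAt_solution_deriv x hx := h.hasDerivAt_solution_deriv x (hab.trans hx)
  re_phase_deriv_nonneg x hx := h.re_phase_deriv_nonneg x (hab.trans hx)
  tendsto_re_phase := h.tendsto_re_phase
  integrableOn_errorControl := h.integrableOn_errorControl.mono_set (Ioi_subset_Ioi hab)

theorem hasDerivAt_lgWronskian (h : IsLiouvilleGreen a r r' r'' S y y') {ε : ℂ} (hε : ε ^ 2 = 1)
    {x : ℝ} (hx : a ≤ x) :
    HasDerivAt (lgWronskian ε r r' S y y') (-(r'' x * exp (ε * S x) * y x)) x := by
  have hr := h.ne_zero x hx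
  have hexp := ((h.hasDerivAt_phase x hx).const_mul ε).cexp
  have hbracket := ((h.hasDerivAt_amplitude x hx).mul (h.hasDerivAt_solution_deriv x hx)).sub
    (((h.hasDerivAt_amplitude_deriv x hx).add ((hasDerivAt_const x ε).div
      (h.hasDerivAt_amplitude x hx) hr)).mul (h.hasDerivAt_solution x hx))
  refine (hexp.mul hbracket).congr_deriv ?_
  simp only [Pi.add_apply, Pi.sub_apply, Pi.mul_apply, Pi.div_apply]
  field_simp
  linear_combination -y x * hε

theorem hasDerivAt_lgWronskian_one (h : IsLiouvilleGreen a r r' r'' S y y') {x : ℝ} (hx : a ≤ x) :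
    HasDerivAt (lgWronskian 1 r r' S y y') (-(r x * r'' x) * lgRatio r S y x) x := by
  refine (h.hasDerivAt_lgWronskian (one_pow 2) hx).congr_deriv ?_
  have hr := h.ne_zero x hx
  simp only [lgRatio, one_mul]
  field_simp

theorem hasDerivAt_lgWronskian_neg_one (h : IsLiouvilleGreen a r r' r'' S y y') {x : ℝ}
    (hx : a ≤ x) : HasDerivAt (lgWronskian (-1) r r' S y y')
      (-(r x * r'' x) * lgRatio r S y x * exp (-(2 * S x))) x := by
  refine (h.hasDerivAt_lgWronskian (by norm_num) hx).congr_deriv ?_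
  have hr := h.ne_zero x hx
  have hexp : exp (-1 * S x) = exp (S x) * exp (-(2 * S x)) := by rw [← exp_add]; ring_nf
  simp only [lgRatio, hexp]
  field_simp

theorem monotoneOn_re_phase (h : IsLiouvilleGreen a r r' r'' S y y') :
    MonotoneOn (fun x => (S x).re) (Ici a) := by
  have hderiv (x) (hx : x ∈ Ici a) : HasDerivAt (fun x => (S x).re) ((r x ^ 2)⁻¹).re x :=
    reCLM.hasFDerivAt.comp_hasDerivAt x (h.hasDerivAt_phase x hx)
  refine monotoneOn_of_hasDerivWithinAt_nonneg (convex_Ici a)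
    (fun x hx => (hderiv x hx).continuousAt.continuousWithinAt)
    (fun x hx => (hderiv x (interior_subset hx)).hasDerivWithinAt)
    fun x hx => h.re_phase_deriv_nonneg x (interior_subset hx)

theorem continuousOn_lgRatio (h : IsLiouvilleGreen a r r' r'' S y y') :
    ContinuousOn (lgRatio r S y) (Ici a) := fun x hx =>
  (((h.hasDerivAt_phase x hx).cexp.continuousAt.mul
    (h.hasDerivAt_solution x hx).continuousAt).div
      (h.hasDerivAt_amplitude x hx).continuousAt (h.ne_zero x hx)).continuousWithinAt

theorem integrableOn_const_mul_norm_errorControl (h : IsLiouvilleGreen a r r' r'' S y y')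
    (M : ℝ) : IntegrableOn (fun x => M * ‖r x * r'' x‖) (Ioi a) :=
  h.integrableOn_errorControl.norm.const_mul M

theorem norm_errorControl_mul_lgRatio_le {M : ℝ} {x : ℝ} (hM : ‖lgRatio r S y x‖ ≤ M) :
    ‖-(r x * r'' x) * lgRatio r S y x‖ ≤ M * ‖r x * r'' x‖ := by
  rw [norm_mul, norm_neg, mul_comm]
  gcongr

section BoundedRatio

variable {M : ℝ} {U : ℂ}

theorem norm_lgWronskian_one_sub_le (h : IsLiouvilleGreen a r r' r'' S y y')
    (hM : ∀ x ∈ Ici a, ‖lgRatio r S y x‖ ≤ M) {b : ℂ}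
    (hb : Tendsto (lgWronskian 1 r r' S y y') atTop (𝓝 b)) :
    ‖lgWronskian 1 r r' S y y' a - b‖ ≤ M * ∫ x in Ioi a, ‖r x * r'' x‖ := by
  rw [← integral_const_mul]
  exact norm_sub_le_integral_Ioi_of_hasDerivAt (fun x hx => h.hasDerivAt_lgWronskian_one hx) hb
    (h.integrableOn_const_mul_norm_errorControl M)
    fun x hx => norm_errorControl_mul_lgRatio_le (hM x (Ioi_subset_Ici_self hx))

theorem exists_tendsto_lgWronskian_one (h : IsLiouvilleGreen a r r' r'' S y y')
    (hM : ∀ x ∈ Ici a, ‖lgRatio r S y x‖ ≤ M) :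
    ∃ b, Tendsto (lgWronskian 1 r r' S y y') atTop (𝓝 b) := by
  have hderiv (x) (hx : x ∈ Ici a) := h.hasDerivAt_lgWronskian_one hx
  exact ⟨_, tendsto_limUnder_of_hasDerivAt_of_integrableOn_Ioi
    (fun x hx => hderiv x (Ioi_subset_Ici_self hx))
    (integrableOn_Ioi_of_hasDerivAt_of_norm_le hderiv
      (h.integrableOn_const_mul_norm_errorControl M)
      fun x hx => norm_errorControl_mul_lgRatio_le (hM x (Ioi_subset_Ici_self hx)))⟩

theorem tendsto_lgWronskian_neg_one (h : IsLiouvilleGreen a r r' r'' S y y')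
    (hU : Tendsto (lgRatio r S y) atTop (𝓝 U)) {b : ℂ}
    (hb : Tendsto (lgWronskian 1 r r' S y y') atTop (𝓝 b)) :
    Tendsto (lgWronskian (-1) r r' S y y') atTop (𝓝 0) := by
  have hexp : Tendsto (fun x => exp (-(2 * S x))) atTop (𝓝 0) := by
    refine tendsto_exp_nhds_zero_iff.2 ?_
    simpa using h.tendsto_re_phase.const_mul_atTop two_pos
  have hprod := ((hU.const_mul 2).add hb).mul hexp
  rw [mul_zero] at hprod
  refine hprod.congr fun x => ?_
  rw [two_mul_lgRatio r r' S y y' x, sub_add_cancel, mul_assoc, ← exp_add, add_neg_cancel,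
    exp_zero, mul_one]

theorem norm_lgWronskian_neg_one_mul_exp_le (h : IsLiouvilleGreen a r r' r'' S y y')
    (hM : ∀ x ∈ Ici a, ‖lgRatio r S y x‖ ≤ M)
    (hlim : Tendsto (lgWronskian (-1) r r' S y y') atTop (𝓝 0)) :
    ‖lgWronskian (-1) r r' S y y' a * exp (2 * S a)‖ ≤ M * ∫ x in Ioi a, ‖r x * r'' x‖ := by
  -- The constant factor `e^{2S(a)}` is moved under the integral, where `|e^{2S(a)-2S(x)}| ≤ 1`.
  have hderiv (x) (hx : x ∈ Ici a) :=
    (h.hasDerivAt_lgWronskian_neg_one hx).mul_const (exp (2 * S a))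
  have hbound : ∀ x ∈ Ioi a, ‖-(r x * r'' x) * lgRatio r S y x * exp (-(2 * S x)) *
      exp (2 * S a)‖ ≤ M * ‖r x * r'' x‖ := fun x hx => by
    have hS : (S a).re ≤ (S x).re :=
      h.monotoneOn_re_phase self_mem_Ici (Ioi_subset_Ici_self hx) (le_of_lt hx)
    have hexp : ‖exp (-(2 * S x) + 2 * S a)‖ ≤ 1 := by
      rw [norm_exp, Real.exp_le_one_iff]
      simpa using hS
    rw [mul_assoc, ← exp_add, norm_mul]
    exact (mul_le_of_le_one_right (norm_nonneg _) hexp).trans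
      (norm_errorControl_mul_lgRatio_le (hM x (Ioi_subset_Ici_self hx)))
  have hzero := hlim.mul_const (exp (2 * S a))
  rw [zero_mul] at hzero
  rw [← integral_const_mul]
  simpa using norm_sub_le_integral_Ioi_of_hasDerivAt hderiv hzero
    (h.integrableOn_const_mul_norm_errorControl M) hbound

/-- The growing Wronskian component decays, which identifies the limit of the other one. -/
theorem tendsto_lgWronskian_one (h : IsLiouvilleGreen a r r' r'' S y y')
    (hM : ∀ x ∈ Ici a, ‖lgRatio r S y x‖ ≤ M) (hU : Tendsto (lgRatio r S y) atTop (𝓝 U)) :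
    Tendsto (lgWronskian 1 r r' S y y') atTop (𝓝 (-(2 * U))) := by
  obtain ⟨b, hb⟩ := h.exists_tendsto_lgWronskian_one hM
  have htail : Tendsto (fun x => M * ∫ t in Ioi x, ‖r t * r'' t‖) atTop (𝓝 0) := by
    simpa using (tendsto_integral_Ioi_zero (μ := volume) (f := fun t => ‖r t * r'' t‖)
      tendsto_id).const_mul M
  have hzero : Tendsto (fun x => lgWronskian (-1) r r' S y y' x * exp (2 * S x)) atTop (𝓝 0) := by
    refine squeeze_zero_norm' ((eventually_ge_atTop a).mono fun x hx => ?_) htail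
    exact (h.mono hx).norm_lgWronskian_neg_one_mul_exp_le (fun t ht => hM t (hx.trans ht))
      (h.tendsto_lgWronskian_neg_one hU hb)
  have hsub := hzero.sub (hU.const_mul 2)
  rw [zero_sub] at hsub
  refine hsub.congr fun x => ?_
  rw [two_mul_lgRatio r r' S y y' x, sub_sub_cancel]

theorem norm_lgRatio_sub_le_of_norm_le (h : IsLiouvilleGreen a r r' r'' S y y')
    (hM : ∀ x ∈ Ici a, ‖lgRatio r S y x‖ ≤ M) (hU : Tendsto (lgRatio r S y) atTop (𝓝 U)) :
    ‖lgRatio r S y a - U‖ ≤ M * ∫ x in Ioi a, ‖r x * r'' x‖ := by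
  have hone := h.tendsto_lgWronskian_one hM hU
  have hplus := h.norm_lgWronskian_one_sub_le hM hone
  have hminus := h.norm_lgWronskian_neg_one_mul_exp_le hM (h.tendsto_lgWronskian_neg_one hU hone)
  have hsplit : 2 * (lgRatio r S y a - U) = lgWronskian (-1) r r' S y y' a * exp (2 * S a) -
      (lgWronskian 1 r r' S y y' a - -(2 * U)) := by
    linear_combination two_mul_lgRatio r r' S y y' a
  have hnorm := norm_sub_le (lgWronskian (-1) r r' S y y' a * exp (2 * S a))
    (lgWronskian 1 r r' S y y' a - -(2 * U))
  rw [← hsplit, norm_mul, Complex.norm_ofNat] at hnorm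
  linarith

end BoundedRatio

theorem bddAbove_norm_lgRatio (h : IsLiouvilleGreen a r r' r'' S y y') {U : ℂ}
    (hU : Tendsto (lgRatio r S y) atTop (𝓝 U)) :
    BddAbove ((fun x => ‖lgRatio r S y x‖) '' Ici a) := by
  obtain ⟨b, hb⟩ := eventually_atTop.1 (hU.norm.eventually_le_const (lt_add_one ‖U‖))
  have hcompact : BddAbove ((fun x => ‖lgRatio r S y x‖) '' Icc a b) :=
    isCompact_Icc.bddAbove_image (h.continuousOn_lgRatio.mono Icc_subset_Ici_self).norm
  have htail : BddAbove ((fun x => ‖lgRatio r S y x‖) '' Ici b) :=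
    ⟨‖U‖ + 1, forall_mem_image.2 hb⟩
  refine (hcompact.union htail).mono ?_
  rw [← image_union]
  exact image_mono fun x hx => (le_total x b).imp (fun hxb => ⟨hx, hxb⟩) id

theorem norm_lgRatio_sub_le (h : IsLiouvilleGreen a r r' r'' S y y') {U : ℂ}
    (hU : Tendsto (lgRatio r S y) atTop (𝓝 U)) :
    (1 - ∫ x in Ioi a, ‖r x * r'' x‖) * ‖lgRatio r S y a - U‖ ≤
      (∫ x in Ioi a, ‖r x * r'' x‖) * ‖U‖ := by
  set V := ∫ x in Ioi a, ‖r x * r'' x‖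
  obtain ⟨M, hMub, hMlub⟩ := Real.exists_isLUB (nonempty_Ici.image _)
    (h.bddAbove_norm_lgRatio hU)
  have hM : ∀ x ∈ Ici a, ‖lgRatio r S y x‖ ≤ M := fun x hx => hMub (mem_image_of_mem _ hx)
  have hM0 : 0 ≤ M := (norm_nonneg _).trans (hM a self_mem_Ici)
  have hdiff (x) (hx : x ∈ Ici a) : ‖lgRatio r S y x - U‖ ≤ M * V :=
    ((h.mono hx).norm_lgRatio_sub_le_of_norm_le (fun t ht => hM t (Ici_subset_Ici.2 hx ht))
      hU).trans <| by
      gcongr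
      exact setIntegral_mono_set h.integrableOn_errorControl.norm
        (ae_of_all _ fun t => norm_nonneg _) (Ioi_subset_Ioi hx).eventuallyLE
  have hMU : M ≤ M * V + ‖U‖ := hMlub <| forall_mem_image.2 fun x hx =>
    (norm_le_norm_sub_add _ U).trans (by gcongr; exact hdiff x hx)
  rcases le_total V 1 with hV1 | hV1
  · calc (1 - V) * ‖lgRatio r S y a - U‖ ≤ (1 - V) * (M * V) := by
          gcongr
          exact hdiff a self_mem_Ici
      _ = V * (M - M * V) := by ring
      _ ≤ V * ‖U‖ := by
          gcongr
          linarith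
  · exact (mul_nonpos_of_nonpos_of_nonneg (by linarith) (norm_nonneg _)).trans (by positivity)

end IsLiouvilleGreen

/-! ### The potential `xⁿ + λ` -/

theorem re_cpow_half_nonneg (z : ℂ) : 0 ≤ (z ^ (1 / 2 : ℂ)).re := by
  rw [one_div, cpow_inv_two_re]
  positivity

theorem ofReal_add_mem_slitPlane {x : ℝ} (hx : 0 ≤ x) {z : ℂ} (hz : z ∈ slitPlane) :
    (x : ℂ) + z ∈ slitPlane := by
  rw [mem_slitPlane_iff] at hz ⊢
  simp only [add_re, add_im, ofReal_re, ofReal_im, zero_add]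
  exact hz.imp_left fun h => by linarith

/-- The potential `xⁿ + λ`, on the real line. -/
def powPotential (n : ℕ) (lam : ℂ) (x : ℝ) : ℂ := x ^ n + lam

section Potential

variable {n : ℕ} {lam : ℂ} {x : ℝ}

theorem powPotential_mem_slitPlane (hlam : lam ∈ slitPlane) (hx : 0 ≤ x) :
    powPotential n lam x ∈ slitPlane := by
  simpa [powPotential] using ofReal_add_mem_slitPlane (pow_nonneg hx n) hlam

theorem powPotential_ne_zero (hlam : lam ∈ slitPlane) (hx : 0 ≤ x) : powPotential n lam x ≠ 0 :=
  slitPlane_ne_zero (powPotential_mem_slitPlane hlam hx)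

theorem hasDerivAt_powPotential_cpow (hlam : lam ∈ slitPlane) (hx : 0 ≤ x) (s : ℂ) :
    HasDerivAt (fun x => powPotential n lam x ^ s)
      (s * powPotential n lam x ^ (s - 1) * (n * x ^ (n - 1))) x := by
  have hpow : HasDerivAt (powPotential n lam) (n * (x : ℂ) ^ (n - 1)) x :=
    ((hasDerivAt_pow n (x : ℂ)).add_const lam).comp_ofReal
  exact (hasStrictDerivAt_cpow_const
    (powPotential_mem_slitPlane hlam hx)).hasDerivAt.comp x hpow

theorem continuousOn_powPotential_cpow (hlam : lam ∈ slitPlane) (s : ℂ) :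
    ContinuousOn (fun x => powPotential n lam x ^ s) (Ici 0) := fun _ hx =>
  (hasDerivAt_powPotential_cpow hlam hx s).continuousAt.continuousWithinAt

theorem powPotential_cpow_mul_cpow (hlam : lam ∈ slitPlane) (hx : 0 ≤ x) (s t : ℂ) :
    powPotential n lam x ^ s * powPotential n lam x ^ t = powPotential n lam x ^ (s + t) :=
  (cpow_add _ _ (powPotential_ne_zero hlam hx)).symm

/-- The Liouville–Green amplitude `(xⁿ + λ)^{-1/4}`. -/
noncomputable def powAmplitude (n : ℕ) (lam : ℂ) (x : ℝ) : ℂ :=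
  powPotential n lam x ^ (-(1 / 4) : ℂ)

/-- The derivative of `powAmplitude`. -/
noncomputable def powAmplitudeDeriv (n : ℕ) (lam : ℂ) (x : ℝ) : ℂ :=
  -(1 / 4) * powPotential n lam x ^ (-(5 / 4) : ℂ) * (n * x ^ (n - 1))

/-- The second derivative of `powAmplitude`. -/
noncomputable def powAmplitudeDeriv₂ (n : ℕ) (lam : ℂ) (x : ℝ) : ℂ :=
  5 / 16 * powPotential n lam x ^ (-(9 / 4) : ℂ) * (n * x ^ (n - 1)) ^ 2 -
    1 / 4 * powPotential n lam x ^ (-(5 / 4) : ℂ) * (n * (n - 1 : ℕ) * x ^ (n - 2))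

theorem hasDerivAt_powAmplitude (hlam : lam ∈ slitPlane) (hx : 0 ≤ x) :
    HasDerivAt (powAmplitude n lam) (powAmplitudeDeriv n lam x) x :=
  (hasDerivAt_powPotential_cpow hlam hx _).congr_deriv <| by
    rw [powAmplitudeDeriv, show (-(1 / 4) - 1 : ℂ) = -(5 / 4) by norm_num]

theorem hasDerivAt_powAmplitudeDeriv (hlam : lam ∈ slitPlane) (hx : 0 ≤ x) :
    HasDerivAt (powAmplitudeDeriv n lam) (powAmplitudeDeriv₂ n lam x) x := by
  have hpow : HasDerivAt (fun x : ℝ => (n * x ^ (n - 1) : ℂ))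
      (n * ((n - 1 : ℕ) * x ^ (n - 2))) x :=
    ((hasDerivAt_pow (n - 1) (x : ℂ)).const_mul (n : ℂ)).comp_ofReal
  refine (((hasDerivAt_powPotential_cpow hlam hx (-(5 / 4))).const_mul (-(1 / 4))).mul
    hpow).congr_deriv ?_
  rw [powAmplitudeDeriv₂, show (-(5 / 4) - 1 : ℂ) = -(9 / 4) by norm_num]
  ring

theorem powAmplitude_ne_zero (hlam : lam ∈ slitPlane) (hx : 0 ≤ x) : powAmplitude n lam x ≠ 0 :=
  fun h => powPotential_ne_zero hlam hx ((cpow_eq_zero_iff _ _).1 h).1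

theorem inv_powAmplitude_sq :
    (powAmplitude n lam x ^ 2)⁻¹ = powPotential n lam x ^ (1 / 2 : ℂ) := by
  rw [powAmplitude, ← cpow_nat_mul, ← cpow_neg]
  norm_num

theorem inv_powAmplitude_pow_four : (powAmplitude n lam x ^ 4)⁻¹ = powPotential n lam x := by
  rw [powAmplitude, ← cpow_nat_mul, ← cpow_neg]
  norm_num

theorem powAmplitude_mul_powAmplitudeDeriv₂ (hlam : lam ∈ slitPlane) (hx : 0 ≤ x) :
    powAmplitude n lam x * powAmplitudeDeriv₂ n lam x =
      5 / 16 * powPotential n lam x ^ (-(5 / 2) : ℂ) * (n * x ^ (n - 1)) ^ 2 -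
        1 / 4 * powPotential n lam x ^ (-(3 / 2) : ℂ) * (n * (n - 1 : ℕ) * x ^ (n - 2)) := by
  have hsecond := powPotential_cpow_mul_cpow (n := n) hlam hx (-(1 / 4)) (-(5 / 4))
  have hfirst := powPotential_cpow_mul_cpow (n := n) hlam hx (-(1 / 4)) (-(9 / 4))
  rw [show (-(1 / 4) + -(5 / 4) : ℂ) = -(3 / 2) by norm_num] at hsecond
  rw [show (-(1 / 4) + -(9 / 4) : ℂ) = -(5 / 2) by norm_num] at hfirst
  rw [powAmplitude, powAmplitudeDeriv₂]
  linear_combination 5 / 16 * (n * x ^ (n - 1)) ^ 2 * hfirst -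
    1 / 4 * (n * (n - 1 : ℕ) * x ^ (n - 2)) * hsecond

end Potential

section SectorBounds

theorem mem_slitPlane_of_abs_arg_le {δ : ℝ} (hδ : 0 < δ) {z : ℂ} (hz : z ≠ 0)
    (harg : |arg z| ≤ Real.pi - δ) : z ∈ slitPlane :=
  mem_slitPlane_iff_arg.2 ⟨fun h => by
    rw [h, abs_of_pos Real.pi_pos] at harg
    linarith, hz⟩

theorem sin_half_mul_add_norm_le_norm_add {δ x : ℝ} (hδ : 0 ≤ δ) (hx : 0 ≤ x) {z : ℂ}
    (harg : |arg z| ≤ Real.pi - δ) : Real.sin (δ / 2) * (x + ‖z‖) ≤ ‖(x : ℂ) + z‖ := by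
  have hcos : -Real.cos δ ≤ Real.cos (arg z) := by
    rw [← Real.cos_pi_sub, ← Real.cos_abs (arg z)]
    exact Real.cos_le_cos_of_nonneg_of_le_pi (abs_nonneg _) (by linarith) harg
  have hnorm : ‖(x : ℂ) + z‖ ^ 2 = x ^ 2 + 2 * x * (‖z‖ * Real.cos (arg z)) + ‖z‖ ^ 2 := by
    rw [norm_mul_cos_arg, Complex.sq_norm, Complex.sq_norm, normSq_apply, normSq_apply]
    simp only [add_re, add_im, ofReal_re, ofReal_im, zero_add]
    ring
  have hsin : Real.sin (δ / 2) ^ 2 = (1 - Real.cos δ) / 2 := by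
    rw [Real.sin_sq_eq_half_sub, mul_div_cancel₀ δ two_ne_zero]
    ring
  refine le_of_sq_le_sq ?_ (norm_nonneg _)
  rw [mul_pow, hsin, hnorm]
  nlinarith [mul_nonneg (mul_nonneg hx (norm_nonneg z)) (sub_nonneg.2 hcos),
    mul_nonneg (neg_le_iff_add_nonneg.1 (Real.neg_one_le_cos δ)) (sq_nonneg (x - ‖z‖))]

theorem le_norm_powPotential (n : ℕ) {δ x σ : ℝ} {lam : ℂ} (hδ : 0 ≤ δ)
    (harg : |arg lam| ≤ Real.pi - δ) (hx : 0 ≤ x) (hσ : 0 ≤ σ) (hσlam : σ ^ n ≤ ‖lam‖) :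
    Real.sin (δ / 2) / 2 ^ (n - 1) * (x + σ) ^ n ≤ ‖powPotential n lam x‖ := by
  have hsin : 0 ≤ Real.sin (δ / 2) := Real.sin_nonneg_of_nonneg_of_le_pi (by positivity) (by
    linarith [abs_nonneg (arg lam), Real.pi_pos])
  calc Real.sin (δ / 2) / 2 ^ (n - 1) * (x + σ) ^ n
      ≤ Real.sin (δ / 2) / 2 ^ (n - 1) * (2 ^ (n - 1) * (x ^ n + σ ^ n)) := by
        gcongr
        exact add_pow_le hx hσ n
    _ = Real.sin (δ / 2) * (x ^ n + σ ^ n) := by field_simp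
    _ ≤ Real.sin (δ / 2) * (x ^ n + ‖lam‖) := by gcongr
    _ ≤ ‖powPotential n lam x‖ := by
        simpa [powPotential] using sin_half_mul_add_norm_le_norm_add hδ (pow_nonneg hx n) harg

variable {n : ℕ} {lam : ℂ} {c σ x : ℝ}

theorem norm_powPotential_cpow_neg_mul_pow_le (hc : 0 < c) (hσ : 0 < σ) (hx : 0 ≤ x)
    (hQ : c * (x + σ) ^ n ≤ ‖powPotential n lam x‖) {s : ℝ} (hs : 0 ≤ s) (k : ℕ) :
    ‖powPotential n lam x ^ (-s : ℂ) * x ^ k‖ ≤ c ^ (-s) * (x + σ) ^ (k - n * s) := by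
  have hxσ : 0 < x + σ := by positivity
  rw [norm_mul, norm_pow, norm_real, Real.norm_of_nonneg hx, ← ofReal_neg, norm_cpow_real]
  calc ‖powPotential n lam x‖ ^ (-s) * x ^ k ≤ (c * (x + σ) ^ n) ^ (-s) * (x + σ) ^ k := by
        gcongr ?_ * ?_ ^ k
        · exact Real.rpow_le_rpow_of_nonpos (by positivity) hQ (neg_nonpos.2 hs)
        · linarith
    _ = c ^ (-s) * (x + σ) ^ (k - n * s) := by
        rw [Real.mul_rpow hc.le (by positivity), ← Real.rpow_natCast_mul hxσ.le, mul_assoc,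
          ← Real.rpow_add_natCast hxσ.ne']
        ring_nf

/-- The constant in the bound of the Liouville–Green error control function, `c` being that of the
lower bound `c (x + σ)ⁿ ≤ |xⁿ + λ|`. -/
noncomputable def errorControlConst (n : ℕ) (c : ℝ) : ℝ :=
  n ^ 2 * (5 / 16 * c ^ (-(5 / 2) : ℝ) + 1 / 4 * c ^ (-(3 / 2) : ℝ))

theorem norm_powAmplitude_mul_powAmplitudeDeriv₂_le (hn : 2 ≤ n) (hlam : lam ∈ slitPlane)
    (hc : 0 < c) (hσ : 0 < σ) (hx : 0 ≤ x) (hQ : c * (x + σ) ^ n ≤ ‖powPotential n lam x‖) :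
    ‖powAmplitude n lam x * powAmplitudeDeriv₂ n lam x‖ ≤
      errorControlConst n c * (x + σ) ^ (-(n / 2 + 2) : ℝ) := by
  have hcast : ((n - 1 : ℕ) : ℝ) = n - 1 := Nat.cast_pred (by lia)
  have hfirst : ‖(5 / 16 * powPotential n lam x ^ (-(5 / 2) : ℂ) * (n * x ^ (n - 1)) ^ 2 : ℂ)‖ ≤
      5 / 16 * n ^ 2 * (c ^ (-(5 / 2) : ℝ) * (x + σ) ^ (-(n / 2 + 2) : ℝ)) := by
    have hbound := norm_powPotential_cpow_neg_mul_pow_le hc hσ hx hQ (s := 5 / 2) (by norm_num)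
      (2 * (n - 1))
    push_cast [hcast] at hbound
    rw [show (2 * (n - 1) - n * (5 / 2) : ℝ) = -(n / 2 + 2) by ring] at hbound
    calc _ = 5 / 16 * n ^ 2 * ‖powPotential n lam x ^ (-(5 / 2) : ℂ) * x ^ (2 * (n - 1))‖ := by
          simp only [norm_mul, norm_pow, norm_div, Complex.norm_ofNat, norm_natCast]
          ring
      _ ≤ _ := by gcongr
  have hsecond : ‖(1 / 4 * powPotential n lam x ^ (-(3 / 2) : ℂ) *
      (n * (n - 1 : ℕ) * x ^ (n - 2)) : ℂ)‖ ≤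
      1 / 4 * n ^ 2 * (c ^ (-(3 / 2) : ℝ) * (x + σ) ^ (-(n / 2 + 2) : ℝ)) := by
    have hbound := norm_powPotential_cpow_neg_mul_pow_le hc hσ hx hQ (s := 3 / 2) (by norm_num)
      (n - 2)
    push_cast [Nat.cast_sub hn] at hbound
    rw [show (n - 2 - n * (3 / 2) : ℝ) = -(n / 2 + 2) by ring] at hbound
    calc _ = 1 / 4 * (n * (n - 1 : ℕ)) *
          ‖powPotential n lam x ^ (-(3 / 2) : ℂ) * x ^ (n - 2)‖ := by
          simp only [norm_mul, norm_pow, norm_div, norm_one, Complex.norm_ofNat, norm_natCast]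
          ring
      _ ≤ _ := by
          rw [sq]
          gcongr
          exact n.sub_le 1
  rw [powAmplitude_mul_powAmplitudeDeriv₂ hlam hx]
  refine (norm_sub_le_of_le hfirst hsecond).trans_eq ?_
  rw [errorControlConst]
  ring

theorem integral_Ioi_add_rpow {s : ℝ} (hs : s < -1) (hσ : 0 < σ) :
    ∫ x in Ioi 0, (x + σ) ^ s = -σ ^ (s + 1) / (s + 1) := by
  have hshift := (measurePreserving_add_right volume σ).setIntegral_preimage_emb
    (measurableEmbedding_addRight σ) (fun x => x ^ s) (Ioi σ)
  rw [preimage_add_const_Ioi, sub_self, integral_Ioi_rpow_of_lt hs hσ] at hshift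
  exact hshift

end SectorBounds

/-! ### Regularised action -/

theorem ofReal_mul_cpow {r : ℝ} (hr : 0 < r) (z s : ℂ) :
    (r * z) ^ s = (r : ℂ) ^ s * z ^ s := by
  rcases eq_or_ne z 0 with rfl | hz
  · rcases eq_or_ne s 0 with rfl | hs
    · simp
    · simp [hs]
  · have hr' : (r : ℂ) ≠ 0 := ofReal_ne_zero.2 hr.ne'
    rw [cpow_def_of_ne_zero (mul_ne_zero hr' hz), cpow_def_of_ne_zero hr', cpow_def_of_ne_zero hz,
      log_ofReal_mul hr hz, ofReal_log hr.le, add_mul, exp_add]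

section PowAction

variable {n : ℕ} {lam : ℂ} {x : ℝ}

theorem integrableOn_powPotential_cpow_neg {c σ s : ℝ} (hc : 0 < c) (hσ : 0 < σ)
    (hlam : lam ∈ slitPlane) (hQ : ∀ x : ℝ, 0 ≤ x → c * (x + σ) ^ n ≤ ‖powPotential n lam x‖)
    (hs : 0 ≤ s) (hns : 1 < n * s) :
    IntegrableOn (fun x => powPotential n lam x ^ (-s : ℂ)) (Ioi 0) := by
  have hdom : IntegrableOn (fun x => c ^ (-s) * (x + σ) ^ (-(n * s))) (Ioi 0) :=
    (integrableOn_add_rpow_Ioi_of_lt (by linarith) (by linarith)).const_mul _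
  refine hdom.mono' (((continuousOn_powPotential_cpow hlam _).mono
    Ioi_subset_Ici_self).aestronglyMeasurable measurableSet_Ioi)
    ((ae_restrict_mem measurableSet_Ioi).mono fun x hx => ?_)
  simpa using norm_powPotential_cpow_neg_mul_pow_le hc hσ (le_of_lt hx) (hQ x (le_of_lt hx)) hs 0

theorem eventually_le_norm_powPotential (hn : n ≠ 0) (hlam : lam ∈ slitPlane) :
    ∃ c > 0, ∃ σ > 0, ∀ᶠ m in 𝓝 lam, m ∈ slitPlane ∧
      ∀ x : ℝ, 0 ≤ x → c * (x + σ) ^ n ≤ ‖powPotential n m x‖ := by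
  have hlam0 : 0 < ‖lam‖ := norm_pos_iff.2 (slitPlane_ne_zero hlam)
  have harg : |arg lam| < Real.pi := abs_lt.2
    ⟨neg_pi_lt_arg lam, (arg_le_pi lam).lt_of_ne (mem_slitPlane_iff_arg.1 hlam).1⟩
  set δ := (Real.pi - |arg lam|) / 2
  have hδ : 0 < δ := by simp only [δ]; linarith
  have hsin : 0 < Real.sin (δ / 2) := Real.sin_pos_of_pos_of_lt_pi (by positivity) (by
    simp only [δ]; linarith [abs_nonneg (arg lam), Real.pi_pos])
  refine ⟨Real.sin (δ / 2) / 2 ^ (n - 1), by positivity, (‖lam‖ / 2) ^ (n⁻¹ : ℝ), by positivity, ?_⟩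
  have harg_ev : ∀ᶠ m in 𝓝 lam, |arg m| < Real.pi - δ :=
    (continuousAt_arg hlam).abs.eventually_lt_const (by simp only [δ]; linarith)
  have hnorm_ev : ∀ᶠ m in 𝓝 lam, ‖lam‖ / 2 < ‖m‖ :=
    continuous_norm.continuousAt.eventually_const_lt (half_lt_self hlam0)
  filter_upwards [isOpen_slitPlane.mem_nhds hlam, harg_ev, hnorm_ev] with m hm hmarg hmnorm
  refine ⟨hm, fun x hx => le_norm_powPotential n hδ.le hmarg.le hx (by positivity) ?_⟩
  rw [Real.rpow_inv_natCast_pow (by positivity) hn]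
  exact hmnorm.le

/-- The period `∫₀^∞ (xⁿ + λ)^{-1/2} dx` of the curve `w² = xⁿ + λ`. -/
noncomputable def powPeriod (n : ℕ) (lam : ℂ) : ℂ :=
  ∫ x in Ioi (0 : ℝ), powPotential n lam x ^ (-(1 / 2) : ℂ)

theorem integrableOn_powPotential_cpow_neg_half (hn : 2 < n) (hlam : lam ∈ slitPlane) :
    IntegrableOn (fun x => powPotential n lam x ^ (-(1 / 2) : ℂ)) (Ioi 0) := by
  obtain ⟨c, hc, σ, hσ, hev⟩ := eventually_le_norm_powPotential (n := n) (by lia) hlam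
  have hn' : (2 : ℝ) < n := mod_cast hn
  simpa using integrableOn_powPotential_cpow_neg (s := 1 / 2) hc hσ hlam hev.self_of_nhds.2
    (by norm_num) (by linarith)

theorem differentiableAt_powPeriod (hn : 2 < n) (hlam : lam ∈ slitPlane) :
    DifferentiableAt ℂ (powPeriod n) lam := by
  obtain ⟨c, hc, σ, hσ, hev⟩ := eventually_le_norm_powPotential (n := n) (by lia) hlam
  have hn' : (2 : ℝ) < n := mod_cast hn
  have hdom : IntegrableOn (fun x => 1 / 2 * (c ^ (-(3 / 2) : ℝ) * (x + σ) ^ (-(n * (3 / 2)) : ℝ)))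
      (Ioi 0) :=
    ((integrableOn_add_rpow_Ioi_of_lt (by linarith) (by linarith)).const_mul _).const_mul _
  refine (hasDerivAt_integral_of_dominated_loc_of_deriv_le (s := {m | m ∈ slitPlane ∧
      ∀ x : ℝ, 0 ≤ x → c * (x + σ) ^ n ≤ ‖powPotential n m x‖})
    (F := fun m x => powPotential n m x ^ (-(1 / 2) : ℂ))
    (F' := fun m x => -(1 / 2) * powPotential n m x ^ (-(3 / 2) : ℂ))
    hev ?_ (integrableOn_powPotential_cpow_neg_half hn hlam) ?_ ?_ hdom ?_).2.differentiableAt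
  · exact hev.mono fun m hm => (integrableOn_powPotential_cpow_neg_half hn hm.1).1
  · exact ((continuousOn_powPotential_cpow hlam _).mono Ioi_subset_Ici_self).aestronglyMeasurable
      measurableSet_Ioi |>.const_mul _
  · refine (ae_restrict_mem measurableSet_Ioi).mono fun x hx m hm => ?_
    have hbound := norm_powPotential_cpow_neg_mul_pow_le hc hσ (le_of_lt hx) (hm.2 x (le_of_lt hx))
      (s := 3 / 2) (by norm_num) 0
    rw [norm_mul, norm_neg, norm_div, norm_one, Complex.norm_ofNat]
    gcongr
    simpa using hbound
  · refine (ae_restrict_mem measurableSet_Ioi).mono fun x hx m hm => ?_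
    refine (((hasDerivAt_id m).const_add ((x : ℂ) ^ n)).cpow_const
      (powPotential_mem_slitPlane hm.1 (le_of_lt hx))).congr_deriv ?_
    rw [show (-(1 / 2) - 1 : ℂ) = -(3 / 2) by norm_num, mul_one]
    rfl

theorem powPeriod_ofReal (hn : n ≠ 0) {m : ℝ} (hm : 0 < m) :
    powPeriod n m = (m : ℂ) ^ (1 / n - 1 / 2 : ℂ) * powPeriod n 1 := by
  set b : ℝ := m ^ (n⁻¹ : ℝ) with hb
  have hb0 : 0 < b := by positivity
  have hbn : b ^ n = m := Real.rpow_inv_natCast_pow hm.le hn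
  have hscale (x : ℝ) : powPotential n m (b * x) = m * powPotential n 1 x := by
    simp only [powPotential, ofReal_mul, mul_pow, ← ofReal_pow, hbn]
    ring
  have hsubst := integral_comp_mul_left_Ioi
    (fun x => powPotential n m x ^ (-(1 / 2) : ℂ)) 0 hb0
  simp only [hscale, ofReal_mul_cpow hm, integral_const_mul, mul_zero] at hsubst
  have hbc : (b : ℂ) = (m : ℂ) ^ (1 / n : ℂ) := by
    rw [hb, ofReal_cpow hm.le]
    simp
  rw [sub_eq_add_neg, cpow_add _ _ (ofReal_ne_zero.2 hm.ne'), ← hbc, mul_assoc, powPeriod,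
    powPeriod, hsubst, real_smul, ofReal_inv, mul_inv_cancel_left₀ (ofReal_ne_zero.2 hb0.ne')]

theorem powPeriod_eq (hn : 2 < n) (hlam : lam ∈ slitPlane) :
    powPeriod n lam = lam ^ (1 / n - 1 / 2 : ℂ) * powPeriod n 1 := by
  have hperiod : AnalyticOnNhd ℂ (powPeriod n) slitPlane :=
    DifferentiableOn.analyticOnNhd
      (fun m hm => (differentiableAt_powPeriod hn hm).differentiableWithinAt) isOpen_slitPlane
  have hpow : AnalyticOnNhd ℂ (fun m => m ^ (1 / n - 1 / 2 : ℂ) * powPeriod n 1) slitPlane :=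
    DifferentiableOn.analyticOnNhd
      (fun m hm => ((hasStrictDerivAt_cpow_const hm).hasDerivAt.mul_const
        (powPeriod n 1)).differentiableAt.differentiableWithinAt) isOpen_slitPlane
  have hreal : ∃ᶠ m : ℂ in 𝓝[≠] 1, powPeriod n m = m ^ (1 / n - 1 / 2 : ℂ) * powPeriod n 1 := by
    have hcast : Tendsto ((↑) : ℝ → ℂ) (𝓝[≠] 1) (𝓝[≠] 1) :=
      tendsto_nhdsWithin_of_tendsto_nhds_of_eventually_within _
        (continuous_ofReal.continuousAt.tendsto.mono_left nhdsWithin_le_nhds)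
        (eventually_nhdsWithin_of_forall fun x hx => by simpa using hx)
    have hpos : ∀ᶠ x : ℝ in 𝓝[≠] 1, 0 < x := eventually_nhdsWithin_of_eventually_nhds
      (eventually_gt_nhds one_pos)
    exact hcast.frequently (hpos.mono fun x hx => powPeriod_ofReal (by lia) hx).frequently
  exact hperiod.eqOn_of_preconnected_of_frequently_eq hpow
    (starConvex_one_slitPlane.isPathConnected one_mem_slitPlane).isConnected.isPreconnected
    one_mem_slitPlane hreal hlam

/-- The action `∫₀ˣ (tⁿ + λ)^{1/2} dt`, the Liouville–Green phase based at the origin. -/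
noncomputable def powAction (n : ℕ) (lam : ℂ) (x : ℝ) : ℂ :=
  ∫ t in (0 : ℝ)..x, powPotential n lam t ^ (1 / 2 : ℂ)

theorem intervalIntegrable_powPotential_cpow (hlam : lam ∈ slitPlane) (hx : 0 ≤ x) (s : ℂ) :
    IntervalIntegrable (fun x => powPotential n lam x ^ s) volume 0 x :=
  ((continuousOn_powPotential_cpow hlam s).mono (by
    rw [uIcc_of_le hx]
    exact Icc_subset_Ici_self)).intervalIntegrable

theorem hasDerivAt_powAction (hlam : lam ∈ slitPlane) (hx : 0 ≤ x) :
    HasDerivAt (powAction n lam) (powPotential n lam x ^ (1 / 2 : ℂ)) x := by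
  have hmeas : StronglyMeasurable fun t => powPotential n lam t ^ (1 / 2 : ℂ) :=
    Measurable.stronglyMeasurable (by unfold powPotential; fun_prop)
  exact intervalIntegral.integral_hasDerivAt_right
    (intervalIntegrable_powPotential_cpow hlam hx _) hmeas.stronglyMeasurableAtFilter
    (hasDerivAt_powPotential_cpow hlam hx _).continuousAt

theorem hasDerivAt_mul_powPotential_cpow_half (hn : n ≠ 0) (hlam : lam ∈ slitPlane)
    (hx : 0 ≤ x) :
    HasDerivAt (fun x : ℝ => x * powPotential n lam x ^ (1 / 2 : ℂ))
      ((n + 2) / 2 * powPotential n lam x ^ (1 / 2 : ℂ) -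
        n / 2 * lam * powPotential n lam x ^ (-(1 / 2) : ℂ)) x := by
  refine ((hasDerivAt_id (x : ℂ)).comp_ofReal.mul
    (hasDerivAt_powPotential_cpow hlam hx (1 / 2))).congr_deriv ?_
  have hpow : (x : ℂ) * x ^ (n - 1) = powPotential n lam x - lam := by
    rw [mul_pow_sub_one hn, powPotential, add_sub_cancel_right]
  have hcpow : powPotential n lam x * powPotential n lam x ^ (-(1 / 2) : ℂ) =
      powPotential n lam x ^ (1 / 2 : ℂ) := by
    nth_rw 1 [← cpow_one (powPotential n lam x)]
    rw [powPotential_cpow_mul_cpow hlam hx]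
    norm_num
  rw [show (1 / 2 - 1 : ℂ) = -(1 / 2) by norm_num]
  simp only [id]
  linear_combination n / 2 * powPotential n lam x ^ (-(1 / 2) : ℂ) * hpow + n / 2 * hcpow

/-- Integration by parts separates the divergent part of the action from a convergent integral. -/
theorem powAction_eq (hn : n ≠ 0) (hlam : lam ∈ slitPlane) (hx : 0 ≤ x) :
    powAction n lam x = 2 / (n + 2) * (x * powPotential n lam x ^ (1 / 2 : ℂ)) +
      n / (n + 2) * lam * ∫ t in (0 : ℝ)..x, powPotential n lam t ^ (-(1 / 2) : ℂ) := by
  have hsqrt := intervalIntegrable_powPotential_cpow (n := n) hlam hx (1 / 2)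
  have hinv := intervalIntegrable_powPotential_cpow (n := n) hlam hx (-(1 / 2))
  have hftc := intervalIntegral.integral_eq_sub_of_hasDerivAt
    (fun t ht => hasDerivAt_mul_powPotential_cpow_half hn hlam
      (show 0 ≤ t from (uIcc_of_le hx ▸ ht).1)) ((hsqrt.const_mul _).sub (hinv.const_mul _))
  rw [intervalIntegral.integral_sub (hsqrt.const_mul _) (hinv.const_mul _),
    intervalIntegral.integral_const_mul, intervalIntegral.integral_const_mul] at hftc
  have hn2 : (n + 2 : ℂ) ≠ 0 := mod_cast (by lia : n + 2 ≠ 0)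
  rw [ofReal_zero, zero_mul, sub_zero] at hftc
  rw [powAction]
  field_simp
  linear_combination 2 * hftc

theorem norm_mul_powPotential_cpow_half_sub_le (hx : 0 < x) :
    ‖x * powPotential n lam x ^ (1 / 2 : ℂ) - (x ^ (n / 2 + 1 : ℝ) : ℝ)‖ ≤
      ‖lam‖ * x ^ (-(n / 2 - 1) : ℝ) := by
  set q := powPotential n lam x ^ (1 / 2 : ℂ) with hq
  set p : ℝ := x ^ (n / 2 : ℝ) with hp
  have hp0 : 0 < p := by positivity
  have hpp : (p : ℂ) ^ 2 = x ^ n := by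
    rw [hp, ← ofReal_pow, ← Real.rpow_mul_natCast hx.le]
    norm_num
  have hqq : q ^ 2 = powPotential n lam x := by
    rw [hq, ← cpow_nat_mul]
    norm_num
  have hfactor : (q - p) * (q + p) = lam := by
    rw [← sub_eq_of_eq_add' (show powPotential n lam x = x ^ n + lam from rfl)]
    linear_combination hqq - hpp
  have hlower : p ≤ ‖q + p‖ := by
    refine le_trans ?_ (re_le_norm _)
    rw [add_re, ofReal_re]
    exact le_add_of_nonneg_left (re_cpow_half_nonneg _)
  have hdiff : ‖q - p‖ ≤ ‖lam‖ * p⁻¹ := by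
    rw [← div_eq_mul_inv, le_div_iff₀ hp0, ← hfactor, norm_mul]
    gcongr
  calc ‖x * q - (x ^ (n / 2 + 1 : ℝ) : ℝ)‖ = x * ‖q - p‖ := by
        rw [Real.rpow_add_one hx.ne', ofReal_mul, mul_comm _ (x : ℂ), ← mul_sub, norm_mul,
          norm_real, Real.norm_of_nonneg hx.le]
    _ ≤ x * (‖lam‖ * p⁻¹) := by gcongr
    _ = ‖lam‖ * x ^ (-(n / 2 - 1) : ℝ) := by
        rw [neg_sub, Real.rpow_sub hx, Real.rpow_one]
        ring

/-- The constant `K` in the regularised action `K λ^{1/2+1/n}` of the potential `xⁿ + λ`. -/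
noncomputable def actionConst (n : ℕ) : ℝ :=
  n / (n + 2) * ∫ x in Ioi (0 : ℝ), (√(x ^ n + 1))⁻¹

theorem powPotential_one_cpow_neg_half (hx : 0 ≤ x) :
    powPotential n 1 x ^ (-(1 / 2) : ℂ) = ((√(x ^ n + 1))⁻¹ : ℝ) := by
  have hx1 : 0 ≤ x ^ n + 1 := by positivity
  rw [Real.sqrt_eq_rpow, ← Real.rpow_neg hx1, ofReal_cpow hx1]
  simp [powPotential]

theorem integrableOn_inv_sqrt_pow_add_one (hn : 2 < n) :
    IntegrableOn (fun x : ℝ => (√(x ^ n + 1))⁻¹) (Ioi 0) := by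
  refine (integrableOn_powPotential_cpow_neg_half hn one_mem_slitPlane).re.congr
    ((ae_restrict_mem measurableSet_Ioi).mono fun x hx => ?_)
  simp only [powPotential_one_cpow_neg_half (le_of_lt hx), RCLike.re_eq_complex_re, ofReal_re]

theorem powPeriod_one (n : ℕ) : powPeriod n 1 = (∫ x in Ioi (0 : ℝ), (√(x ^ n + 1))⁻¹ : ℝ) := by
  rw [← integral_complex_ofReal, powPeriod]
  exact setIntegral_congr_fun measurableSet_Ioi fun x hx =>
    powPotential_one_cpow_neg_half (le_of_lt hx)

theorem tendsto_powAction_sub (hn : 2 < n) (hlam : lam ∈ slitPlane) :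
    Tendsto (fun x : ℝ => powAction n lam x - (2 / (n + 2) * x ^ (n / 2 + 1 : ℝ) : ℝ)) atTop
      (𝓝 (actionConst n * lam ^ (1 / 2 + 1 / n : ℂ))) := by
  have hn' : (2 : ℝ) < n := mod_cast hn
  have hperiod := intervalIntegral_tendsto_integral_Ioi 0
    (integrableOn_powPotential_cpow_neg_half hn hlam) tendsto_id
  have hsqrt : Tendsto (fun x : ℝ => x * powPotential n lam x ^ (1 / 2 : ℂ) -
      (x ^ (n / 2 + 1 : ℝ) : ℝ)) atTop (𝓝 0) := by
    refine squeeze_zero_norm' ((eventually_gt_atTop 0).mono fun x hx =>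
      norm_mul_powPotential_cpow_half_sub_le hx) ?_
    simpa using (tendsto_rpow_neg_atTop (show (0 : ℝ) < n / 2 - 1 by linarith)).const_mul ‖lam‖
  have hlim := (hsqrt.const_mul (2 / (n + 2) : ℂ)).add (hperiod.const_mul (n / (n + 2) * lam))
  have hvalue : n / (n + 2) * lam * powPeriod n lam =
      actionConst n * lam ^ (1 / 2 + 1 / n : ℂ) := by
    rw [powPeriod_eq hn hlam, powPeriod_one, actionConst,
      show (1 / 2 + 1 / n : ℂ) = 1 + (1 / n - 1 / 2) by ring,
      cpow_add _ _ (slitPlane_ne_zero hlam), cpow_one]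
    push_cast
    ring
  rw [mul_zero, zero_add, ← powPeriod, hvalue] at hlim
  refine hlim.congr' ((eventually_ge_atTop 0).mono fun x hx => ?_)
  simp only [id, powAction_eq (show n ≠ 0 by lia) hlam hx]
  push_cast
  ring

theorem tendsto_re_powAction (hn : 2 < n) (hlam : lam ∈ slitPlane) :
    Tendsto (fun x => (powAction n lam x).re) atTop atTop := by
  have hmain : Tendsto (fun x : ℝ => 2 / (n + 2) * x ^ (n / 2 + 1 : ℝ)) atTop atTop :=
    (tendsto_rpow_atTop (by positivity)).const_mul_atTop (by positivity)
  refine (((continuous_re.tendsto _).comp (tendsto_powAction_sub hn hlam)).add_atTop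
    hmain).congr fun x => ?_
  simp only [Function.comp_apply, sub_re, ofReal_re, sub_add_cancel]

end PowAction

/-! ### Subdominant solutions -/

section Subdominant

variable {n : ℕ} {lam : ℂ}

theorem continuousOn_powAmplitude_mul_powAmplitudeDeriv₂ (hlam : lam ∈ slitPlane) :
    ContinuousOn (fun x => powAmplitude n lam x * powAmplitudeDeriv₂ n lam x) (Ici 0) := by
  have hcpow (s : ℂ) := continuousOn_powPotential_cpow (n := n) hlam s
  unfold powAmplitude powAmplitudeDeriv₂
  fun_prop

theorem integrableOn_powAmplitude_mul_powAmplitudeDeriv₂ (hn : 2 ≤ n) (hlam : lam ∈ slitPlane) :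
    IntegrableOn (fun x => powAmplitude n lam x * powAmplitudeDeriv₂ n lam x) (Ioi 0) := by
  obtain ⟨c, hc, σ, hσ, hev⟩ := eventually_le_norm_powPotential (n := n) (by lia) hlam
  have hdom : IntegrableOn (fun x => errorControlConst n c * (x + σ) ^ (-(n / 2 + 2) : ℝ))
      (Ioi 0) :=
    (integrableOn_add_rpow_Ioi_of_lt (by linarith [n.cast_nonneg (α := ℝ)])
      (by linarith)).const_mul _
  refine hdom.mono' (((continuousOn_powAmplitude_mul_powAmplitudeDeriv₂ hlam).mono
    Ioi_subset_Ici_self).aestronglyMeasurable measurableSet_Ioi)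
    ((ae_restrict_mem measurableSet_Ioi).mono fun x hx => ?_)
  exact norm_powAmplitude_mul_powAmplitudeDeriv₂_le hn hlam hc hσ (le_of_lt hx)
    (hev.self_of_nhds.2 x (le_of_lt hx))

theorem errorControlConst_nonneg {c : ℝ} (hc : 0 ≤ c) : 0 ≤ errorControlConst n c := by
  unfold errorControlConst
  positivity

theorem integral_norm_powAmplitude_mul_powAmplitudeDeriv₂_le (hn : 2 ≤ n) {δ : ℝ} (hδ : 0 < δ)
    (hlam0 : lam ≠ 0) (harg : |arg lam| ≤ Real.pi - δ) :
    ∫ x in Ioi (0 : ℝ), ‖powAmplitude n lam x * powAmplitudeDeriv₂ n lam x‖ ≤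
      errorControlConst n (Real.sin (δ / 2) / 2 ^ (n - 1)) * ‖lam‖ ^ (-(1 / 2 + 1 / n) : ℝ) := by
  have hlam := mem_slitPlane_of_abs_arg_le hδ hlam0 harg
  have hnorm : 0 < ‖lam‖ := norm_pos_iff.2 hlam0
  have hn0 : (0 : ℝ) < n := by positivity
  set c := Real.sin (δ / 2) / 2 ^ (n - 1)
  have hc : 0 < c := div_pos (Real.sin_pos_of_pos_of_lt_pi (by positivity) (by
    linarith [abs_nonneg (arg lam), Real.pi_pos])) (by positivity)
  set σ : ℝ := ‖lam‖ ^ (n⁻¹ : ℝ) with hσ_def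
  have hσ : 0 < σ := by positivity
  have hσn : σ ^ n ≤ ‖lam‖ := (Real.rpow_inv_natCast_pow hnorm.le (by lia)).le
  have hs : -(n / 2 + 2 : ℝ) < -1 := by linarith
  calc ∫ x in Ioi (0 : ℝ), ‖powAmplitude n lam x * powAmplitudeDeriv₂ n lam x‖
      ≤ ∫ x in Ioi (0 : ℝ), errorControlConst n c * (x + σ) ^ (-(n / 2 + 2) : ℝ) :=
        setIntegral_mono_on (integrableOn_powAmplitude_mul_powAmplitudeDeriv₂ hn hlam).norm
          ((integrableOn_add_rpow_Ioi_of_lt hs (by linarith)).const_mul _) measurableSet_Ioi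
          fun x hx => norm_powAmplitude_mul_powAmplitudeDeriv₂_le hn hlam hc hσ (le_of_lt hx)
            (le_norm_powPotential n hδ.le harg (le_of_lt hx) hσ.le hσn)
    _ = errorControlConst n c * (σ ^ (-(n / 2 + 1) : ℝ) / (n / 2 + 1)) := by
        rw [integral_const_mul, integral_Ioi_add_rpow hs hσ,
          show (-(n / 2 + 2) + 1 : ℝ) = -(n / 2 + 1) by ring, neg_div_neg_eq]
    _ ≤ errorControlConst n c * σ ^ (-(n / 2 + 1) : ℝ) := by
        gcongr
        · exact errorControlConst_nonneg hc.le
        · exact div_le_self (by positivity) (by linarith)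
    _ = errorControlConst n c * ‖lam‖ ^ (-(1 / 2 + 1 / n) : ℝ) := by
        rw [hσ_def, ← Real.rpow_mul hnorm.le]
        congr 2
        field_simp

/-- `y`, with derivative `y'`, solves `y'' = (xⁿ + λ) y` on the half-line `[0, ∞)` and is the
subdominant solution there, normalised by
`y(x) ~ x^{-n/4} exp(-(2/(n+2)) x^{n/2+1})`; this normalisation is meaningful for `n > 2`. -/
structure IsSubdominant (n : ℕ) (lam : ℂ) (y y' : ℝ → ℂ) : Prop where
  hasDerivAt : ∀ x, 0 ≤ x → HasDerivAt y (y' x) x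
  hasDerivAt_deriv : ∀ x, 0 ≤ x → HasDerivAt y' (powPotential n lam x * y x) x
  tendsto : Tendsto (fun x : ℝ => y x * (x ^ (n / 4 : ℝ) : ℝ) *
    exp (2 / (n + 2) * x ^ (n / 2 + 1 : ℝ) : ℝ)) atTop (𝓝 1)

theorem tendsto_powPotential_cpow_div (hn : n ≠ 0) (lam : ℂ) (s : ℝ) :
    Tendsto (fun x : ℝ => powPotential n lam x ^ (s : ℂ) / (x ^ (n * s) : ℝ)) atTop (𝓝 1) := by
  have hinv : Tendsto (fun x : ℝ => 1 + lam * ((x ^ n)⁻¹ : ℝ)) atTop (𝓝 1) := by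
    have hreal : Tendsto (fun x : ℝ => (x ^ n)⁻¹) atTop (𝓝 0) :=
      (tendsto_pow_atTop hn).inv_tendsto_atTop
    simpa using (((continuous_ofReal.tendsto 0).comp hreal).const_mul lam).const_add 1
  have hcpow := (continuousAt_cpow_const (b := s) one_mem_slitPlane).tendsto.comp hinv
  rw [one_cpow] at hcpow
  refine hcpow.congr' ((eventually_gt_atTop 0).mono fun x hx => ?_)
  beta_reduce
  have hxn : 0 < x ^ n := by positivity
  have hfactor : powPotential n lam x = (x ^ n : ℝ) * (1 + lam * ((x ^ n)⁻¹ : ℝ)) := by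
    have hxC : (x : ℂ) ≠ 0 := ofReal_ne_zero.2 hx.ne'
    rw [powPotential]
    push_cast
    field_simp
  rw [Function.comp_apply, hfactor, ofReal_mul_cpow hxn, ← ofReal_cpow hxn.le,
    Real.rpow_natCast_mul hx.le, mul_div_cancel_left₀ _ (ofReal_ne_zero.2 (by positivity))]

theorem lgRatio_powAction_zero (hn : n ≠ 0) (lam : ℂ) (y : ℝ → ℂ) :
    lgRatio (powAmplitude n lam) (powAction n lam) y 0 = y 0 * lam ^ (1 / 4 : ℂ) := by
  simp [lgRatio, powAmplitude, powAction, powPotential, hn, cpow_neg]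

namespace IsSubdominant

variable {y y' : ℝ → ℂ}

theorem isLiouvilleGreen (h : IsSubdominant n lam y y') (hn : 2 < n) (hlam : lam ∈ slitPlane) :
    IsLiouvilleGreen 0 (powAmplitude n lam) (powAmplitudeDeriv n lam) (powAmplitudeDeriv₂ n lam)
      (powAction n lam) y y' where
  ne_zero _ hx := powAmplitude_ne_zero hlam hx
  hasDerivAt_amplitude _ hx := hasDerivAt_powAmplitude hlam hx
  hasDerivAt_amplitude_deriv _ hx := hasDerivAt_powAmplitudeDeriv hlam hx
  hasDerivAt_phase _ hx := inv_powAmplitude_sq ▸ hasDerivAt_powAction hlam hx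
  hasDerivAt_solution := h.hasDerivAt
  hasDerivAt_solution_deriv x hx := inv_powAmplitude_pow_four ▸ h.hasDerivAt_deriv x hx
  re_phase_deriv_nonneg _ _ := inv_powAmplitude_sq ▸ re_cpow_half_nonneg _
  tendsto_re_phase := tendsto_re_powAction hn hlam
  integrableOn_errorControl := integrableOn_powAmplitude_mul_powAmplitudeDeriv₂ hn.le hlam

theorem tendsto_lgRatio (h : IsSubdominant n lam y y') (hn : 2 < n) (hlam : lam ∈ slitPlane) :
    Tendsto (lgRatio (powAmplitude n lam) (powAction n lam) y) atTop
      (𝓝 (exp (actionConst n * lam ^ (1 / 2 + 1 / n : ℂ)))) := by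
  have hlim := (h.tendsto.mul (tendsto_powAction_sub hn hlam).cexp).mul
    (tendsto_powPotential_cpow_div (show n ≠ 0 by lia) lam (1 / 4))
  rw [one_mul, mul_one] at hlim
  refine hlim.congr' ((eventually_gt_atTop 0).mono fun x hx => ?_)
  have hpow : ((x ^ (n / 4 : ℝ) : ℝ) : ℂ) ≠ 0 := ofReal_ne_zero.2 (by positivity)
  rw [lgRatio, powAmplitude, cpow_neg, div_inv_eq_mul, exp_sub, mul_one_div]
  push_cast
  field_simp [exp_ne_zero]

theorem norm_sub_one_le (h : IsSubdominant n lam y y') (hn : 2 < n) (hlam : lam ∈ slitPlane)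
    (hV : ∫ x in Ioi (0 : ℝ), ‖powAmplitude n lam x * powAmplitudeDeriv₂ n lam x‖ ≤ 1 / 2) :
    ‖y 0 * lam ^ (1 / 4 : ℂ) * exp (-actionConst n * lam ^ (1 / 2 + 1 / n : ℂ)) - 1‖ ≤
      2 * ∫ x in Ioi (0 : ℝ), ‖powAmplitude n lam x * powAmplitudeDeriv₂ n lam x‖ := by
  set V := ∫ x in Ioi (0 : ℝ), ‖powAmplitude n lam x * powAmplitudeDeriv₂ n lam x‖
  set U := exp (actionConst n * lam ^ (1 / 2 + 1 / n : ℂ)) with hU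
  have hU0 : 0 < ‖U‖ := norm_pos_iff.2 (exp_ne_zero _)
  have hcompare : (1 - V) * ‖y 0 * lam ^ (1 / 4 : ℂ) - U‖ ≤ V * ‖U‖ :=
    lgRatio_powAction_zero (show n ≠ 0 by lia) lam y ▸
      (h.isLiouvilleGreen hn hlam).norm_lgRatio_sub_le (h.tendsto_lgRatio hn hlam)
  have hquot : y 0 * lam ^ (1 / 4 : ℂ) * exp (-actionConst n * lam ^ (1 / 2 + 1 / n : ℂ)) - 1 =
      (y 0 * lam ^ (1 / 4 : ℂ) - U) / U := by
    rw [neg_mul, exp_neg, ← hU, sub_div, div_self (exp_ne_zero _), div_eq_mul_inv (y 0 * _)]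
  rw [hquot, norm_div, div_le_iff₀ hU0]
  nlinarith [norm_nonneg (y 0 * lam ^ (1 / 4 : ℂ) - U)]

end IsSubdominant

end Subdominant

theorem std_solution_asymptotics_at_zero_general {n : ℕ} (hn : 2 < n) {δ : ℝ} (hδ : 0 < δ) :
    ∃ C > (0 : ℝ), ∃ R > (0 : ℝ), ∀ lam : ℂ, R ≤ ‖lam‖ → |arg lam| ≤ Real.pi - δ →
      ∀ y y' : ℝ → ℂ, IsSubdominant n lam y y' →
        ‖y 0 * lam ^ (1 / 4 : ℂ) * exp (-actionConst n * lam ^ (1 / 2 + 1 / n : ℂ)) - 1‖ ≤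
          C * ‖lam‖ ^ (-(1 / 2 + 1 / n) : ℝ) := by
  set D := errorControlConst n (Real.sin (δ / 2) / 2 ^ (n - 1))
  have hsmall : Tendsto (fun ρ : ℝ => D * ρ ^ (-(1 / 2 + 1 / n) : ℝ)) atTop (𝓝 0) := by
    simpa using (tendsto_rpow_neg_atTop (show (0 : ℝ) < 1 / 2 + 1 / n by positivity)).const_mul D
  obtain ⟨R, hR⟩ := eventually_atTop.1 (hsmall.eventually_le_const one_half_pos)
  refine ⟨max (2 * D) 1, by positivity, max R 1, by positivity,
    fun lam hlamR harg y y' hy => ?_⟩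
  have hlam0 : lam ≠ 0 := norm_pos_iff.1 (one_pos.trans_le ((le_max_right R 1).trans hlamR))
  have hV := integral_norm_powAmplitude_mul_powAmplitudeDeriv₂_le hn.le hδ hlam0 harg
  refine (hy.norm_sub_one_le hn (mem_slitPlane_of_abs_arg_le hδ hlam0 harg)
    (hV.trans (hR _ ((le_max_left R 1).trans hlamR)))).trans ?_
  calc _ ≤ 2 * (D * ‖lam‖ ^ (-(1 / 2 + 1 / n) : ℝ)) := by gcongr
    _ = 2 * D * ‖lam‖ ^ (-(1 / 2 + 1 / n) : ℝ) := (mul_assoc _ _ _).symm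
    _ ≤ max (2 * D) 1 * ‖lam‖ ^ (-(1 / 2 + 1 / n) : ℝ) := by
        gcongr
        exact le_max_left _ _

/-! ### The cubic potential -/

/-- The `x`-coordinate `(t⁴ + 8t) / (4 (1 - t³))` of duplication on the elliptic curve
`w² = 1 - t³`, with its sign reversed, so that it maps `(0, 1)` onto `(0, ∞)`. -/
noncomputable def cubicDuplication (t : ℝ) : ℝ := (t ^ 4 + 8 * t) / (4 * (1 - t ^ 3))

section CubicDuplication

variable {t : ℝ}

theorem one_sub_pow_three_pos (ht : t < 1) : 0 < 1 - t ^ 3 := by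
  have := Odd.strictMono_pow (R := ℝ) (n := 3) (by decide) ht
  simp only [one_pow] at this
  linarith

theorem cubicDuplication_numerator_pos (ht : t ∈ Ioo (0 : ℝ) 1) : 0 < 8 + 20 * t ^ 3 - t ^ 6 := by
  have hpow : t ^ 6 < 1 := pow_lt_one₀ ht.1.le ht.2 (by norm_num)
  have := pow_pos ht.1 3
  linarith

theorem hasDerivAt_cubicDuplication (ht : t < 1) :
    HasDerivAt cubicDuplication ((8 + 20 * t ^ 3 - t ^ 6) / (4 * (1 - t ^ 3) ^ 2)) t := by
  have hpos := one_sub_pow_three_pos ht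
  have hnum : HasDerivAt (fun t : ℝ => t ^ 4 + 8 * t) (4 * t ^ 3 + 8) t := by
    simpa using (hasDerivAt_pow 4 t).fun_add ((hasDerivAt_id' t).const_mul 8)
  have hden : HasDerivAt (fun t : ℝ => 4 * (1 - t ^ 3)) (4 * -(3 * t ^ 2)) t := by
    simpa using ((hasDerivAt_pow 3 t).const_sub 1).const_mul 4
  refine (hnum.div hden (by positivity)).congr_deriv ?_
  field_simp
  ring

theorem cubicDuplication_pow_three_add_one (ht : t < 1) :
    cubicDuplication t ^ 3 + 1 = ((8 + 20 * t ^ 3 - t ^ 6) / (8 * √(1 - t ^ 3) ^ 3)) ^ 2 := by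
  have hpos := one_sub_pow_three_pos ht
  have hsq : √(1 - t ^ 3) ^ 6 = (1 - t ^ 3) ^ 3 := by
    rw [pow_mul _ 2 3, Real.sq_sqrt hpos.le]
  rw [cubicDuplication, div_pow _ (8 * _), mul_pow 8, ← pow_mul, hsq]
  field_simp
  ring

theorem injOn_cubicDuplication : InjOn cubicDuplication (Ioo 0 1) := by
  refine (strictMonoOn_of_hasDerivWithinAt_pos (convex_Ioo 0 1)
    (fun t ht => (hasDerivAt_cubicDuplication ht.2).continuousAt.continuousWithinAt)
    (fun t ht => (hasDerivAt_cubicDuplication (interior_subset ht).2).hasDerivWithinAt)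
    fun t ht => ?_).injOn
  have hpos := one_sub_pow_three_pos (interior_subset ht).2
  exact div_pos (cubicDuplication_numerator_pos (interior_subset ht)) (by positivity)

theorem image_cubicDuplication : cubicDuplication '' Ioo 0 1 = Ioi 0 := by
  refine Subset.antisymm (image_subset_iff.2 fun t ht => ?_) fun x hx => ?_
  · have hpos := one_sub_pow_three_pos ht.2
    have ht0 := ht.1
    rw [mem_preimage, mem_Ioi, cubicDuplication]
    positivity
  · have hx0 : 0 < x := hx
    have hcont : ContinuousOn (fun t : ℝ => t ^ 4 + 8 * t - 4 * x * (1 - t ^ 3)) (Icc 0 1) := by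
      fun_prop
    have hsign : (0 : ℝ) ∈ Ioo ((0 : ℝ) ^ 4 + 8 * 0 - 4 * x * (1 - 0 ^ 3))
        ((1 : ℝ) ^ 4 + 8 * 1 - 4 * x * (1 - 1 ^ 3)) := by
      constructor <;> norm_num [hx0]
    obtain ⟨t, ht, hroot⟩ := intermediate_value_Ioo zero_le_one hcont hsign
    have hpos := one_sub_pow_three_pos ht.2
    refine ⟨t, ht, ?_⟩
    rw [cubicDuplication, div_eq_iff (by positivity)]
    linarith

theorem abs_deriv_cubicDuplication_mul (ht : t ∈ Ioo (0 : ℝ) 1) :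
    |(8 + 20 * t ^ 3 - t ^ 6) / (4 * (1 - t ^ 3) ^ 2)| * (√(cubicDuplication t ^ 3 + 1))⁻¹ =
      2 * (√(1 - t ^ 3))⁻¹ := by
  have hpos := one_sub_pow_three_pos ht.2
  have hnum := cubicDuplication_numerator_pos ht
  have hsq : (1 - t ^ 3) ^ 2 = √(1 - t ^ 3) ^ 4 := by
    rw [pow_mul _ 2 2, Real.sq_sqrt hpos.le]
  rw [cubicDuplication_pow_three_add_one ht.2, Real.sqrt_sq (by positivity),
    abs_of_pos (by positivity), hsq]
  field_simp
  norm_num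

theorem integrableOn_inv_sqrt_one_sub_pow_three :
    IntegrableOn (fun t : ℝ => (√(1 - t ^ 3))⁻¹) (Ioo 0 1) := by
  have hint := integrableOn_inv_sqrt_pow_add_one (n := 3) (by norm_num)
  rw [← image_cubicDuplication, integrableOn_image_iff_integrableOn_abs_deriv_smul
    measurableSet_Ioo (fun t ht => (hasDerivAt_cubicDuplication ht.2).hasDerivWithinAt)
    injOn_cubicDuplication] at hint
  refine (hint.const_mul (1 / 2)).congr
    ((ae_restrict_mem measurableSet_Ioo).mono fun t ht => ?_)
  simp only [smul_eq_mul, abs_deriv_cubicDuplication_mul ht]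
  ring

theorem integral_inv_sqrt_pow_three_add_one :
    ∫ x in Ioi (0 : ℝ), (√(x ^ 3 + 1))⁻¹ = 2 * ∫ t in (0 : ℝ)..1, (√(1 - t ^ 3))⁻¹ := by
  rw [← image_cubicDuplication, integral_image_eq_integral_abs_deriv_smul measurableSet_Ioo
    (fun t ht => (hasDerivAt_cubicDuplication ht.2).hasDerivWithinAt) injOn_cubicDuplication]
  simp only [smul_eq_mul]
  rw [setIntegral_congr_fun measurableSet_Ioo fun t ht => abs_deriv_cubicDuplication_mul ht,
    integral_const_mul, intervalIntegral.integral_of_le zero_le_one, integral_Ioc_eq_integral_Ioo]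

theorem hasDerivAt_mul_sqrt_one_sub_pow_three (ht : t < 1) :
    HasDerivAt (fun t : ℝ => t * √(1 - t ^ 3))
      (5 / 2 * √(1 - t ^ 3) - 3 / 2 * (√(1 - t ^ 3))⁻¹) t := by
  have hpos := one_sub_pow_three_pos ht
  have hsqrt := ((hasDerivAt_pow 3 t).const_sub 1).sqrt hpos.ne'
  refine ((hasDerivAt_id t).mul hsqrt).congr_deriv ?_
  simp only [id]
  field_simp
  push_cast
  linear_combination -3 * Real.sq_sqrt hpos.le

theorem integral_inv_sqrt_one_sub_pow_three :
    ∫ t in (0 : ℝ)..1, (√(1 - t ^ 3))⁻¹ = 5 / 3 * ∫ t in (0 : ℝ)..1, √(1 - t ^ 3) := by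
  have hcont : Continuous fun t : ℝ => √(1 - t ^ 3) := by fun_prop
  have hsqrt := (hcont.intervalIntegrable (μ := volume) 0 1).const_mul (5 / 2)
  have hinv := ((intervalIntegrable_iff_integrableOn_Ioo_of_le zero_le_one).2
    integrableOn_inv_sqrt_one_sub_pow_three).const_mul (3 / 2)
  have hftc := intervalIntegral.integral_eq_sub_of_hasDerivAt_of_le zero_le_one
    (continuous_id.mul hcont).continuousOn
    (fun t ht => hasDerivAt_mul_sqrt_one_sub_pow_three ht.2) (hsqrt.sub hinv)
  rw [intervalIntegral.integral_sub hsqrt hinv, intervalIntegral.integral_const_mul,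
    intervalIntegral.integral_const_mul] at hftc
  norm_num at hftc
  linarith

theorem actionConst_three : actionConst 3 = 2 * ∫ t in (0 : ℝ)..1, √(1 - t ^ 3) := by
  rw [actionConst, integral_inv_sqrt_pow_three_add_one, integral_inv_sqrt_one_sub_pow_three]
  push_cast
  ring

end CubicDuplication

theorem IsStdSolutionFamily.isSubdominant {f : ℂ → ℂ → ℂ} (hf : IsStdSolutionFamily f) (lam : ℂ) :
    IsSubdominant 3 lam (fun x => f x lam) (fun x => deriv (fun z => f z lam) x) where
  hasDerivAt x _ := (((hf.1 lam).1 x).hasDerivAt).comp_ofReal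
  hasDerivAt_deriv x _ := by
    have hderiv : Differentiable ℂ (deriv fun z => f z lam) :=
      ((hf.1 lam).1.contDiff (n := 2)).differentiable_deriv_two
    simpa only [(hf.1 lam).2 x, powPotential, ofReal_pow] using (hderiv x).hasDerivAt.comp_ofReal
  tendsto := by
    obtain ⟨C, -, R, -, hasymp⟩ :=
      hf.2 (Real.pi / 10) (by positivity) {lam} isCompact_singleton
    have hsmall : Tendsto (fun x : ℝ => C * x ^ (-(1 / 2) : ℝ)) atTop (𝓝 0) := by
      simpa using (tendsto_rpow_neg_atTop (one_half_pos (α := ℝ))).const_mul C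
    rw [tendsto_iff_norm_sub_tendsto_zero]
    refine squeeze_zero' (.of_forall fun _ => norm_nonneg _) ?_ hsmall
    filter_upwards [eventually_ge_atTop R, eventually_ge_atTop 0] with x hR hx
    have hbound := hasymp lam rfl x (by rwa [norm_real, Real.norm_of_nonneg hx]) (by
      rw [arg_ofReal_of_nonneg hx, abs_zero]
      linarith [Real.pi_pos])
    rw [norm_real, Real.norm_of_nonneg hx] at hbound
    have hpow : ((x ^ ((3 : ℕ) / 4 : ℝ) : ℝ) : ℂ) = (x : ℂ) ^ (3 / 4 : ℂ) := by
      push_cast [ofReal_cpow hx]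
      rfl
    have hphase : ((2 / ((3 : ℕ) + 2) * x ^ ((3 : ℕ) / 2 + 1 : ℝ) : ℝ) : ℂ) =
        2 / 5 * (x : ℂ) ^ (5 / 2 : ℂ) := by
      push_cast [ofReal_cpow hx]
      norm_num
    rwa [hpow, hphase]

/-- Asymptotics of `f(0,λ)`: with `K = 2∫₀¹ √(1-t³) dt`,
`f(0,λ) = λ^{-1/4} e^{K λ^{5/6}} (1 + O(λ^{-5/6}))` in `|arg λ| ≤ π - δ`. -/
theorem std_solution_asymptotics_at_zero (f : ℂ → ℂ → ℂ) (hf : IsStdSolutionFamily f)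
    (K : ℝ) (hK : K = 2 * ∫ t in (0:ℝ)..1, Real.sqrt (1 - t ^ 3)) :
    ∀ δ > (0 : ℝ), ∃ C > (0 : ℝ), ∃ R > (0 : ℝ), ∀ lam : ℂ,
      R ≤ ‖lam‖ → |Complex.arg lam| ≤ Real.pi - δ →
      ‖f 0 lam * lam ^ ((1 : ℂ) / 4) *
          Complex.exp (-(K : ℂ) * lam ^ ((5 : ℂ) / 6)) - 1‖
        ≤ C * ‖lam‖ ^ (-(5 / 6) : ℝ) := by
  intro δ hδ
  obtain ⟨C, hC, R, hR, hasymp⟩ := std_solution_asymptotics_at_zero_general (n := 3) (by lia) hδ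
  refine ⟨C, hC, R, hR, fun lam hlam harg => ?_⟩
  have hexp : (1 / 2 + 1 / (3 : ℕ) : ℂ) = 5 / 6 := by norm_num
  have hexp_real : (1 / 2 + 1 / (3 : ℕ) : ℝ) = 5 / 6 := by norm_num
  simpa only [actionConst_three, ← hK, hexp, hexp_real, ofReal_zero] using
    hasymp lam hlam harg _ _ (hf.isSubdominant lam)
end

section
/- Let f be a standard solution family and set ω = e^{2πi/5}. Then for every λ ∈ ℂ there exists C ∈ ℂ such that f(ω·z, ω³·λ) + ω·f(ω^{−1}·z, ω^{−3}·λ) = C·f(z, λ) for all z ∈ ℂ. (Stokes relation f₋ + ω·f₊ = C(λ)·f.) -/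
open Complex

/-!
Both `f₋` and `f₊` solve the equation of `f`. On the positive ray they grow like
`r^{-3/4} exp ((2/5) r^{5/2})`, and the factor `ω` makes their leading terms cancel in
`h = f₋ + ω f₊`. The Wronskian `c` of `f` and `h` is constant, so `(h / f)' = c / f²` is
comparable, unless `c = 0`, to the derivative of `exp ((4/5) r^{5/2})`. By L'Hôpital's rule `h / f`
would then grow like `exp ((4/5) r^{5/2})`, contradicting the cancellation. Hence `c = 0`, and `h`
is a multiple of `f`. The same argument works for `z ^ m + lam` with `ω = e^{2πi/(m+2)}`.
-/

open Filter Topology Asymptotics Bornology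

section LHopital

variable {F : Type*} [NormedAddCommGroup F] [NormedSpace ℝ F] {E E' : ℝ → ℝ}

theorem isLittleO_of_hasDerivAt_of_isLittleO {v v' : ℝ → F}
    (hv : ∀ᶠ r in atTop, HasDerivAt v (v' r) r) (hE : ∀ᶠ r in atTop, HasDerivAt E (E' r) r)
    (hE'_nonneg : ∀ᶠ r in atTop, 0 ≤ E' r) (hE_top : Tendsto E atTop atTop)
    (hv' : v' =o[atTop] E') : v =o[atTop] E := by
  refine isLittleO_iff.2 fun ε hε => ?_
  have hv'_le : ∀ᶠ r in atTop, ‖v' r‖ ≤ ε / 2 * E' r := by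
    filter_upwards [isLittleO_iff.1 hv' (half_pos hε), hE'_nonneg] with r hr hr_nonneg
    rwa [Real.norm_of_nonneg hr_nonneg] at hr
  obtain ⟨a, ha⟩ := eventually_atTop.1 (hv.and (hE.and hv'_le))
  have hB (r : ℝ) (hr : a ≤ r) :
      HasDerivAt (fun s => ‖v a‖ + ε / 2 * (E s - E a)) (ε / 2 * E' r) r :=
    (((ha r hr).2.1.sub_const _).const_mul _).const_add _
  have hv_le (r : ℝ) (hr : a ≤ r) : ‖v r‖ ≤ ‖v a‖ + ε / 2 * (E r - E a) :=
    image_norm_le_of_norm_deriv_right_le_deriv_boundary'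
      (fun x hx => (ha x hx.1).1.continuousAt.continuousWithinAt)
      (fun x hx => (ha x hx.1).1.hasDerivWithinAt) (by simp)
      (fun x hx => (hB x hx.1).continuousAt.continuousWithinAt)
      (fun x hx => (hB x hx.1).hasDerivWithinAt)
      (fun x hx => (ha x hx.1).2.2) ⟨hr, le_rfl⟩
  have hE_large := (hE_top.const_mul_atTop (half_pos hε)).eventually_ge_atTop
    (‖v a‖ - ε / 2 * E a)
  filter_upwards [eventually_ge_atTop a, hE_top.eventually_ge_atTop 0, hE_large]
    with r hr hE_nonneg hEr
  rw [Real.norm_of_nonneg hE_nonneg]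
  linarith [hv_le r hr]

theorem tendsto_inv_smul_of_hasDerivAt_smul {u g : ℝ → F} {l : F}
    (hu : ∀ᶠ r in atTop, HasDerivAt u (E' r • g r) r)
    (hE : ∀ᶠ r in atTop, HasDerivAt E (E' r) r) (hE'_nonneg : ∀ᶠ r in atTop, 0 ≤ E' r)
    (hE_top : Tendsto E atTop atTop) (hg : Tendsto g atTop (𝓝 l)) :
    Tendsto (fun r => (E r)⁻¹ • u r) atTop (𝓝 l) := by
  have hderiv : ∀ᶠ r in atTop, HasDerivAt (fun s => u s - E s • l) (E' r • (g r - l)) r := by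
    filter_upwards [hu, hE] with r hur hEr
    rw [smul_sub]
    exact hur.sub (hEr.smul_const l)
  have hsmall : (fun r => E' r • (g r - l)) =o[atTop] E' := by
    simpa only [smul_eq_mul, mul_one] using
      (isBigO_refl E' atTop).smul_isLittleO
        ((isLittleO_one_iff ℝ).2 (tendsto_sub_nhds_zero_iff.2 hg))
  have hlim := (isLittleO_of_hasDerivAt_of_isLittleO hderiv hE hE'_nonneg hE_top
    hsmall).tendsto_inv_smul_nhds_zero
  refine tendsto_sub_nhds_zero_iff.1 (hlim.congr' ?_)
  filter_upwards [hE_top.eventually_ne_atTop 0] with r hr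
  rw [smul_sub, inv_smul_smul₀ hr]

end LHopital

section Wronskian

variable {𝕜 : Type*} [NontriviallyNormedField 𝕜]

/-- The Wronskian `u v' - u' v` of two functions of one variable. -/
noncomputable def wronskian (u v : 𝕜 → 𝕜) (z : 𝕜) : 𝕜 :=
  u z * deriv v z - deriv u z * v z

theorem hasDerivAt_div_wronskian {u v : 𝕜 → 𝕜} {z : 𝕜} (hu : DifferentiableAt 𝕜 u z)
    (hv : DifferentiableAt 𝕜 v z) (hz : u z ≠ 0) :
    HasDerivAt (fun w => v w / u w) (wronskian u v z / u z ^ 2) z := by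
  refine (hv.hasDerivAt.div hu.hasDerivAt hz).congr_deriv ?_
  rw [wronskian]
  ring

theorem exists_eq_const_mul_of_wronskian_eq_zero {u v : ℂ → ℂ} (hu : Differentiable ℂ u)
    (hv : Differentiable ℂ v) (hW : ∀ z, wronskian u v z = 0) {z₀ : ℂ} (hz₀ : u z₀ ≠ 0) :
    ∃ C, ∀ z, v z = C * u z := by
  obtain ⟨δ, hδ, hu_ne⟩ := Metric.eventually_nhds_iff_ball.1
    ((hu z₀).continuousAt.eventually_ne hz₀)
  have hderiv (z) (hz : z ∈ Metric.ball z₀ δ) : HasDerivAt (fun w => v w / u w) 0 z := by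
    simpa only [hW, zero_div] using hasDerivAt_div_wronskian (hu z) (hv z) (hu_ne z hz)
  obtain ⟨C, hC⟩ := Metric.isOpen_ball.exists_is_const_of_deriv_eq_zero
    (convex_ball z₀ δ).isPreconnected
    (fun z hz => (hderiv z hz).differentiableAt.differentiableWithinAt)
    (fun z hz => (hderiv z hz).deriv)
  have hlocal : v =ᶠ[𝓝 z₀] fun z => C * u z := by
    filter_upwards [Metric.ball_mem_nhds z₀ hδ] with z hz
    exact (div_eq_iff (hu_ne z hz)).1 (hC z hz)
  have hv_an : AnalyticOnNhd ℂ v Set.univ := fun z _ => hv.analyticAt z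
  have hCu_an : AnalyticOnNhd ℂ (fun z => C * u z) Set.univ :=
    fun z _ => (hu.const_mul C).analyticAt z
  exact ⟨C, congrFun (hv_an.eq_of_eventuallyEq hCu_an hlocal)⟩

end Wronskian

/-- `u` is an entire solution of the Schrödinger equation `u'' = q u`. -/
structure IsEntireSolution (q u : ℂ → ℂ) : Prop where
  differentiable : Differentiable ℂ u
  deriv_deriv : ∀ z, deriv (deriv u) z = q z * u z

namespace IsEntireSolution

variable {q u v : ℂ → ℂ}

theorem add (hu : IsEntireSolution q u) (hv : IsEntireSolution q v) :
    IsEntireSolution q (fun z => u z + v z) where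
  differentiable := hu.differentiable.add hv.differentiable
  deriv_deriv z := by
    have hderiv : deriv (fun w => u w + v w) = fun w => deriv u w + deriv v w :=
      funext fun w => deriv_fun_add (hu.differentiable w) (hv.differentiable w)
    rw [hderiv, deriv_fun_add (hu.differentiable.deriv z) (hv.differentiable.deriv z),
      hu.deriv_deriv, hv.deriv_deriv, mul_add]

theorem const_mul (hu : IsEntireSolution q u) (c : ℂ) :
    IsEntireSolution q (fun z => c * u z) where
  differentiable := hu.differentiable.const_mul c
  deriv_deriv z := by
    simp only [deriv_const_mul_field', hu.deriv_deriv]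
    ring

theorem comp_const_mul (hu : IsEntireSolution q u) (a : ℂ) :
    IsEntireSolution (fun z => a ^ 2 * q (a * z)) (fun z => u (a * z)) where
  differentiable := hu.differentiable.comp (differentiable_id.const_mul a)
  deriv_deriv z := by
    have hderiv : deriv (fun w => u (a * w)) = fun w => a * deriv u (a * w) :=
      funext fun w => deriv_comp_mul_left a u w
    rw [hderiv, deriv_const_mul_field, deriv_comp_mul_left a (deriv u), hu.deriv_deriv]
    simp only [smul_eq_mul]
    ring

theorem exists_wronskian_eq_const (hu : IsEntireSolution q u) (hv : IsEntireSolution q v) :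
    ∃ c, ∀ z, wronskian u v z = c := by
  have hderiv (z : ℂ) : HasDerivAt (wronskian u v) 0 z := by
    refine (((hu.differentiable z).hasDerivAt.mul (hv.differentiable.deriv z).hasDerivAt).sub
      ((hu.differentiable.deriv z).hasDerivAt.mul (hv.differentiable z).hasDerivAt)).congr_deriv ?_
    rw [hu.deriv_deriv, hv.deriv_deriv]
    ring
  exact ⟨wronskian u v 0, fun z => is_const_of_deriv_eq_zero
    (fun w => (hderiv w).differentiableAt) (fun w => (hderiv w).deriv) z 0⟩

theorem wronskian_eq_zero_of_tendsto (hu : IsEntireSolution q u) (hv : IsEntireSolution q v)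
    {E E' : ℝ → ℝ} {l : ℂ} (hE : ∀ᶠ r in atTop, HasDerivAt E (E' r) r)
    (hE'_nonneg : ∀ᶠ r in atTop, 0 ≤ E' r) (hE_top : Tendsto E atTop atTop) (hl : l ≠ 0)
    (hu_lim : Tendsto (fun r : ℝ => E' r * u r ^ 2) atTop (𝓝 l))
    (hv_lim : Tendsto (fun r : ℝ => (E r)⁻¹ • (v r / u r)) atTop (𝓝 0)) (z : ℂ) :
    wronskian u v z = 0 := by
  obtain ⟨c, hc⟩ := hu.exists_wronskian_eq_const hv
  have hquot : ∀ᶠ r : ℝ in atTop, HasDerivAt (fun s : ℝ => v s / u s)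
      (E' r • (c / (E' r * u r ^ 2))) r := by
    filter_upwards [hu_lim.eventually_ne hl] with r hr
    have hE'r : (E' r : ℂ) ≠ 0 := left_ne_zero_of_mul hr
    have hur : u r ≠ 0 := pow_ne_zero_iff two_ne_zero |>.1 (right_ne_zero_of_mul hr)
    refine (hasDerivAt_div_wronskian (hu.differentiable r) (hv.differentiable r)
      hur).comp_ofReal.congr_deriv ?_
    rw [hc, real_smul]
    field_simp
  have hcl : 0 = c / l := tendsto_nhds_unique hv_lim
    (tendsto_inv_smul_of_hasDerivAt_smul hquot hE hE'_nonneg hE_top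
      (tendsto_const_nhds.div hu_lim hl))
  rw [hc]
  exact (div_eq_zero_iff.1 hcl.symm).resolve_right hl

theorem exists_eq_const_mul_of_liouvilleGreen (hu : IsEntireSolution q u)
    (hv : IsEntireSolution q v) {φ P : ℝ → ℝ} {l : ℂ}
    (hφ : ∀ᶠ r in atTop, HasDerivAt φ (P r ^ 2) r) (hφ_top : Tendsto φ atTop atTop) (hl : l ≠ 0)
    (hu_lim : Tendsto (fun r : ℝ => u r * P r * exp (φ r)) atTop (𝓝 l))
    (hv_lim : Tendsto (fun r : ℝ => v r * P r * exp (-φ r)) atTop (𝓝 0)) :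
    ∃ C, ∀ z, v z = C * u z := by
  have hne : ∀ᶠ r : ℝ in atTop, u r * P r * exp (φ r) ≠ 0 := hu_lim.eventually_ne hl
  have hexp (r : ℝ) : exp (2 * φ r) = exp (φ r) ^ 2 := by rw [two_mul, exp_add, sq]
  have hE : ∀ᶠ r in atTop, HasDerivAt (fun s => Real.exp (2 * φ s))
      (Real.exp (2 * φ r) * (2 * P r ^ 2)) r :=
    hφ.mono fun r hr => (hr.const_mul 2).exp
  have hu_sq_lim : Tendsto
      (fun r : ℝ => ((Real.exp (2 * φ r) * (2 * P r ^ 2) : ℝ) : ℂ) * u r ^ 2)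
      atTop (𝓝 (2 * l ^ 2)) := by
    refine ((hu_lim.pow 2).const_mul 2).congr fun r => ?_
    push_cast
    rw [hexp]
    ring
  have hquot_lim : Tendsto (fun r : ℝ => (Real.exp (2 * φ r))⁻¹ • (v r / u r)) atTop (𝓝 0) := by
    rw [← zero_div l]
    refine (hv_lim.div hu_lim hl).congr' ?_
    filter_upwards [hne] with r hr
    have hPr : (P r : ℂ) ≠ 0 := right_ne_zero_of_mul (left_ne_zero_of_mul hr)
    simp only [Pi.div_apply, real_smul, ofReal_inv, ofReal_exp, ofReal_mul, ofReal_ofNat, hexp,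
      exp_neg]
    field_simp
  obtain ⟨r, hr⟩ := hne.exists
  exact exists_eq_const_mul_of_wronskian_eq_zero hu.differentiable hv.differentiable
    (hu.wronskian_eq_zero_of_tendsto hv hE (Eventually.of_forall fun r => by positivity)
      (Real.tendsto_exp_atTop.comp (hφ_top.const_mul_atTop two_pos))
      (mul_ne_zero two_ne_zero (pow_ne_zero 2 hl)) hu_sq_lim hquot_lim)
    (left_ne_zero_of_mul (left_ne_zero_of_mul hr))

end IsEntireSolution

/-- The leading Liouville–Green phase `∫₀^r t^{m/2} dt` of `u'' = (z ^ m + lam) u` on the positive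
ray. -/
noncomputable def lgPhase (m : ℕ) (r : ℝ) : ℝ :=
  2 / (m + 2) * r ^ ((m + 2) / 2 : ℝ)

/-- The inverse `r^{m/4}` of the leading Liouville–Green amplitude of `u'' = (z ^ m + lam) u` on
the positive ray. -/
noncomputable def lgWeight (m : ℕ) (r : ℝ) : ℝ :=
  r ^ (m / 4 : ℝ)

theorem hasDerivAt_lgPhase (m : ℕ) {r : ℝ} (hr : 0 < r) :
    HasDerivAt (lgPhase m) (lgWeight m r ^ 2) r := by
  refine ((Real.hasDerivAt_rpow_const (Or.inl hr.ne')).const_mul _).congr_deriv ?_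
  have hexponent : ((m : ℝ) + 2) / 2 - 1 = m / 4 * (2 : ℕ) := by
    push_cast
    ring
  rw [hexponent, Real.rpow_mul hr.le, Real.rpow_natCast, lgWeight]
  field_simp

theorem tendsto_lgPhase_atTop (m : ℕ) : Tendsto (lgPhase m) atTop atTop :=
  (tendsto_rpow_atTop (by positivity)).const_mul_atTop (by positivity)

/-- Sibuya's subdominant solution of `u'' = (z ^ m + lam) u`: an entire solution asymptotic to
`z^{-m/4} exp (-(2/(m+2)) z^{(m+2)/2})` along each ray of the open sector `|arg z| < 3π/(m+2)`.
The powers of `z = e^{iθ} r` are written out in polar form, so no branch has to be chosen. -/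
structure IsSubdominantSolution (m : ℕ) (lam : ℂ) (u : ℂ → ℂ) : Prop where
  isEntireSolution : IsEntireSolution (fun z => z ^ m + lam) u
  tendsto_ray : ∀ θ : ℝ, |θ| < 3 * Real.pi / (m + 2) →
    Tendsto (fun r : ℝ => u (exp (θ * I) * r) * lgWeight m r *
        exp (exp ((m + 2) / 2 * (θ * I)) * lgPhase m r))
      atTop (𝓝 (exp (-(m / 4 * (θ * I)))))

namespace IsSubdominantSolution

variable {m : ℕ} {lam ω : ℂ} {u : ℂ → ℂ}

theorem isEntireSolution_rotate (hω : ω ^ (m + 2) = 1)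
    (hu : IsSubdominantSolution m (ω ^ m * lam) u) :
    IsEntireSolution (fun z => z ^ m + lam) (fun z => u (ω * z)) := by
  convert hu.isEntireSolution.comp_const_mul ω using 2 with z
  linear_combination (-(z ^ m + lam)) * hω

theorem tendsto_pos_real (hu : IsSubdominantSolution m lam u) :
    Tendsto (fun r : ℝ => u r * lgWeight m r * exp (lgPhase m r)) atTop (𝓝 1) := by
  simpa using hu.tendsto_ray 0 (by rw [abs_zero]; positivity)

theorem tendsto_stokes_ray (hu : IsSubdominantSolution m lam u) {θ : ℝ}
    (hθ : |θ| = 2 * Real.pi / (m + 2)) :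
    Tendsto (fun r : ℝ => u (exp (θ * I) * r) * lgWeight m r * exp (-lgPhase m r))
      atTop (𝓝 (exp (-(m / 4 * (θ * I))))) := by
  have hθ_lt : |θ| < 3 * Real.pi / (m + 2) := by
    rw [hθ]
    gcongr
    norm_num
  have hphase : exp ((m + 2) / 2 * (θ * I)) = -1 := by
    have hm : (m + 2 : ℂ) ≠ 0 := by exact_mod_cast (m + 1).succ_ne_zero
    rcases (abs_eq (by positivity)).1 hθ with rfl | rfl
    · rw [← exp_pi_mul_I]
      congr 1
      push_cast
      field_simp
    · rw [← exp_neg_pi_mul_I]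
      congr 1
      push_cast
      field_simp
  simpa only [hphase, neg_one_mul] using hu.tendsto_ray θ hθ_lt

theorem tendsto_stokes_sum (hω : ω = exp (2 * Real.pi * I / (m + 2))) {lam₁ lam₂ : ℂ}
    {u₁ u₂ : ℂ → ℂ} (hu₁ : IsSubdominantSolution m lam₁ u₁)
    (hu₂ : IsSubdominantSolution m lam₂ u₂) :
    Tendsto (fun r : ℝ => (u₁ (ω * r) + ω * u₂ (ω⁻¹ * r)) * lgWeight m r * exp (-lgPhase m r))
      atTop (𝓝 0) := by
  have hm : (m + 2 : ℂ) ≠ 0 := by exact_mod_cast (m + 1).succ_ne_zero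
  set α : ℝ := 2 * Real.pi / (m + 2) with hα
  have hα_abs : |α| = α := abs_of_pos (by positivity)
  have hω_exp : ω = exp (α * I) := by
    rw [hω, hα]
    push_cast
    ring_nf
  have hω_inv : ω⁻¹ = exp ((-α : ℝ) * I) := by
    rw [hω_exp, ← exp_neg, ofReal_neg, neg_mul]
  have hcancel : exp (-(m / 4 * (α * I))) + ω * exp (-(m / 4 * ((-α : ℝ) * I))) = 0 := by
    have hangle : α * I + -(m / 4 * ((-α : ℝ) * I)) = -(m / 4 * (α * I)) + Real.pi * I := by
      rw [hα]
      push_cast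
      field_simp
      ring
    rw [hω_exp, ← exp_add, hangle, exp_add, exp_pi_mul_I]
    ring
  have hlim₁ := hu₁.tendsto_stokes_ray hα_abs
  have hlim₂ := (hu₂.tendsto_stokes_ray (θ := -α) (by rw [abs_neg, hα_abs])).const_mul ω
  rw [← hcancel]
  rw [← hω_exp] at hlim₁
  rw [← hω_inv] at hlim₂
  exact (hlim₁.add hlim₂).congr fun r => by ring

end IsSubdominantSolution

theorem arg_exp_ofReal_mul_I_mul {θ r : ℝ} (hθ : θ ∈ Set.Ioc (-Real.pi) Real.pi) (hr : 0 < r) :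
    arg (exp (θ * I) * r) = θ := by
  rw [arg_mul_real hr, arg_exp_mul_I, (toIocMod_eq_self Real.two_pi_pos).2]
  rwa [show -Real.pi + 2 * Real.pi = Real.pi by ring]

theorem exp_ofReal_mul_I_mul_cpow {θ r : ℝ} (hθ : θ ∈ Set.Ioc (-Real.pi) Real.pi) (hr : 0 < r)
    (s : ℝ) : (exp (θ * I) * r) ^ (s : ℂ) = exp (s * (θ * I)) * (r ^ s : ℝ) := by
  have hlog : log (exp (θ * I) * r) = Real.log r + θ * I := by
    rw [log_mul_ofReal r hr _ (exp_ne_zero _), log_exp (by simpa using hθ.1) (by simpa using hθ.2)]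
  rw [cpow_def_of_ne_zero (mul_ne_zero (exp_ne_zero _) (ofReal_ne_zero.2 hr.ne')), hlog,
    Real.rpow_def_of_pos hr, ofReal_exp, ← exp_add]
  congr 1
  push_cast
  ring

namespace IsStdSolutionFamily

variable {f : ℂ → ℂ → ℂ}

theorem tendsto_sector (hf : IsStdSolutionFamily f) (lam : ℂ) {ε : ℝ} (hε : 0 < ε) :
    Tendsto (fun z : ℂ => f z lam * z ^ ((3 : ℂ) / 4) * exp (2 / 5 * z ^ ((5 : ℂ) / 2)))
      (cobounded ℂ ⊓ 𝓟 {z | |arg z| ≤ 3 * Real.pi / 5 - ε}) (𝓝 1) := by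
  obtain ⟨C, -, R, -, hbound⟩ := hf.2 ε hε {lam} isCompact_singleton
  have hdecay : Tendsto (fun z : ℂ => C * ‖z‖ ^ (-(1 / 2) : ℝ)) (cobounded ℂ) (𝓝 0) := by
    simpa using ((tendsto_rpow_neg_atTop one_half_pos).comp
      tendsto_norm_cobounded_atTop).const_mul C
  refine tendsto_iff_norm_sub_tendsto_zero.2
    (squeeze_zero' (Eventually.of_forall fun _ => norm_nonneg _) ?_ (hdecay.mono_left inf_le_left))
  filter_upwards [(tendsto_norm_cobounded_atTop.eventually_ge_atTop R).filter_mono inf_le_left,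
    mem_inf_of_right (mem_principal_self _)] with z hzR hz_arg
  exact hbound lam rfl z hzR hz_arg

theorem tendsto_ray (hf : IsStdSolutionFamily f) (lam : ℂ) {θ : ℝ}
    (hθ : |θ| < 3 * Real.pi / 5) :
    Tendsto (fun r : ℝ => f (exp (θ * I) * r) lam * lgWeight 3 r *
        exp (exp (5 / 2 * (θ * I)) * lgPhase 3 r))
      atTop (𝓝 (exp (-(3 / 4 * (θ * I))))) := by
  have hθ_mem : θ ∈ Set.Ioc (-Real.pi) Real.pi := by
    constructor <;> linarith [abs_lt.1 hθ, Real.pi_pos]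
  have hray : Tendsto (fun r : ℝ => exp (θ * I) * r) atTop
      (cobounded ℂ ⊓ 𝓟 {z | |arg z| ≤ 3 * Real.pi / 5 - (3 * Real.pi / 5 - |θ|)}) := by
    refine tendsto_inf.2 ⟨tendsto_norm_atTop_iff_cobounded.1 ?_, tendsto_principal.2 ?_⟩
    · simpa only [norm_mul, norm_exp_ofReal_mul_I, one_mul, norm_real] using
        tendsto_norm_atTop_atTop
    · filter_upwards [eventually_gt_atTop 0] with r hr
      rw [arg_exp_ofReal_mul_I_mul hθ_mem hr, sub_sub_cancel]
  have hlim := ((hf.tendsto_sector lam (sub_pos.2 hθ)).comp hray).const_mul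
    (exp (-(3 / 4 * (θ * I))))
  rw [mul_one] at hlim
  refine hlim.congr' ?_
  filter_upwards [eventually_gt_atTop 0] with r hr
  have hpow_weight := exp_ofReal_mul_I_mul_cpow hθ_mem hr (3 / 4)
  have hpow_phase := exp_ofReal_mul_I_mul_cpow hθ_mem hr (5 / 2)
  push_cast at hpow_weight hpow_phase
  have hweight : lgWeight 3 r = r ^ (3 / 4 : ℝ) := by norm_num [lgWeight]
  have hphase : lgPhase 3 r = 2 / 5 * r ^ (5 / 2 : ℝ) := by norm_num [lgPhase]
  simp only [Function.comp_apply, hpow_weight, hpow_phase, hweight, hphase, exp_neg]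
  push_cast
  rw [mul_left_comm (2 / 5 : ℂ)]
  field_simp

theorem isSubdominantSolution (hf : IsStdSolutionFamily f) (lam : ℂ) :
    IsSubdominantSolution 3 lam (fun z => f z lam) where
  isEntireSolution := ⟨(hf.1 lam).1, (hf.1 lam).2⟩
  tendsto_ray θ hθ := by
    have hfive : ((3 : ℕ) : ℝ) + 2 = 5 := by norm_num
    have hfive' : ((3 : ℕ) : ℂ) + 2 = 5 := by norm_num
    rw [hfive] at hθ
    rw [hfive']
    exact hf.tendsto_ray lam hθ

end IsStdSolutionFamily

theorem stokes_relation_general {m : ℕ} {lam ω : ℂ} {u u₁ u₂ : ℂ → ℂ}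
    (hω : ω = exp (2 * Real.pi * I / (m + 2))) (hu : IsSubdominantSolution m lam u)
    (hu₁ : IsSubdominantSolution m (ω ^ m * lam) u₁)
    (hu₂ : IsSubdominantSolution m (ω⁻¹ ^ m * lam) u₂) :
    ∃ C, ∀ z, u₁ (ω * z) + ω * u₂ (ω⁻¹ * z) = C * u z := by
  have hω_pow : ω ^ (m + 2) = 1 := by
    rw [hω]
    exact_mod_cast (isPrimitiveRoot_exp (m + 2) (by positivity)).pow_eq_one
  have hω_inv_pow : ω⁻¹ ^ (m + 2) = 1 := by rw [inv_pow, hω_pow, inv_one]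
  have hsum := (hu₁.isEntireSolution_rotate hω_pow).add
    ((hu₂.isEntireSolution_rotate hω_inv_pow).const_mul ω)
  exact hu.isEntireSolution.exists_eq_const_mul_of_liouvilleGreen hsum
    ((eventually_gt_atTop 0).mono fun r => hasDerivAt_lgPhase m) (tendsto_lgPhase_atTop m)
    one_ne_zero hu.tendsto_pos_real (hu₁.tendsto_stokes_sum hω hu₂)

/-- The Stokes relation `f₋ + ω f₊ = C(λ) f` with `ω = e^{2πi/5}`. -/
theorem stokes_relation (f : ℂ → ℂ → ℂ) (hf : IsStdSolutionFamily f)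
    (ω : ℂ) (hω : ω = Complex.exp (2 * Real.pi * Complex.I / 5)) :
    ∀ lam : ℂ, ∃ C : ℂ, ∀ z : ℂ,
      f (ω * z) (ω ^ 3 * lam) + ω * f (ω⁻¹ * z) ((ω⁻¹) ^ 3 * lam) = C * f z lam := by
  intro lam
  exact stokes_relation_general (hω.trans (by norm_num)) (hf.isSubdominantSolution lam)
    (hf.isSubdominantSolution _) (hf.isSubdominantSolution _)
end
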